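/- Let Ω be a non-convex quadrilateral with reflex interior angle β ∈ (π, 2π), and let d(x) = dist(x, ∂Ω). Then the constant c_β is best possible: for every c > c_β there exists u ∈ C_c^∞(Ω), u ≢ 0, with ∫_Ω |∇u|² dx < c ∫_Ω u²/d² dx. -/

import Mathlib

/-!
Trial functions are concentrated at the reflex vertex. In log-polar coordinates `w = log z` around
that vertex the Dirichlet integral keeps its form, and the weight `1 / d²` becomes `1 / ρ(θ)²` with
`ρ` depending on the angle `θ = im w` only. For a product `χ(re w) f(θ)` the cutoff `χ` costs
arbitrarily little when it is spread over a long interval of `re w < 0`, so it suffices to find `f`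
with `∫ f'² < c ∫ f² / ρ²` on `|θ| < β / 2`.

If `c > 1/4`, such an `f` exists close to an edge, by the sharpness of the one-dimensional Hardy
inequality. If `c` exceeds a solution `c₀ < 1/4` of the Hardy-constant equation, `f` is close to the
positive solution of `-f'' = c₀ f / ρ²`: it is `cos (√c₀ θ)` where the vertex is the nearest
boundary point and a cosh integral where an edge is nearest, and the two match to first order
exactly when the Hardy-constant equation holds.
-/

open Real MeasureTheory Set

noncomputable abbrev E2 := EuclideanSpace ℝ (Fin 2)

/-- `c` solves the Hardy-constant equation for the angle `β`. -/
def hardyEq (c β : ℝ) : Prop :=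
  Real.sqrt c * Real.tan (Real.sqrt c * ((β - Real.pi) / 2)) =
    2 * (Real.Gamma ((3 + Real.sqrt (1 - 4 * c)) / 4) /
         Real.Gamma ((1 + Real.sqrt (1 - 4 * c)) / 4)) ^ 2

/-- `βcr` is the critical angle: the unique angle in `(π, 2π)` with
`tan((βcr − π)/4) = 4 (Γ(3/4)/Γ(1/4))²`. -/
def isBetaCr (βcr : ℝ) : Prop :=
  βcr ∈ Set.Ioo Real.pi (2 * Real.pi) ∧
    Real.tan ((βcr - Real.pi) / 4) = 4 * (Real.Gamma (3 / 4) / Real.Gamma (1 / 4)) ^ 2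

/-- `c = c_β`: for `β ≤ βcr`, `c = 1/4`; for `β > βcr`, `c` is the unique solution in
`(0, 1/4]` of the Hardy-constant equation for `β`. -/
def isHardyConst (βcr β c : ℝ) : Prop :=
  (β ≤ βcr ∧ c = 1 / 4) ∨ (βcr < β ∧ c ∈ Set.Ioc (0 : ℝ) (1 / 4) ∧ hardyEq c β)

/-- The closed convex wedge with vertex `v` spanned by the directions towards `a` and `b`. -/
def wedge (v a b : E2) : Set E2 :=
  {p | ∃ s t : ℝ, 0 ≤ s ∧ 0 ≤ t ∧ p = v + s • (a - v) + t • (b - v)}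

/-- `Ω` is a non-convex quadrilateral with reflex interior angle `β ∈ (π, 2π)`:
a bounded nonempty open set whose boundary is a simple closed polygon with four
vertices `v 0, v 1, v 2, v 3`, exactly one of whose interior angles equals `β` and is
reflex (near the reflex vertex `Ω` coincides with the complement of the wedge of the two
adjacent edges, so the interior angle there is `2π` minus the unsigned angle between the
edges), while at every other vertex `Ω` coincides locally with the interior of the wedge
(a convex vertex, with interior angle `< π`). -/
def IsNonconvexQuadrilateral (Ω : Set E2) (β : ℝ) : Prop :=
  IsOpen Ω ∧ Bornology.IsBounded Ω ∧ Ω.Nonempty ∧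
  Real.pi < β ∧ β < 2 * Real.pi ∧
  ∃ v : Fin 4 → E2, Function.Injective v ∧
    frontier Ω = ⋃ i, segment ℝ (v i) (v (i + 1)) ∧
    (∀ i, segment ℝ (v i) (v (i + 1)) ∩ segment ℝ (v (i + 1)) (v (i + 2)) = {v (i + 1)}) ∧
    (∀ i, segment ℝ (v i) (v (i + 1)) ∩ segment ℝ (v (i + 2)) (v (i + 3)) = ∅) ∧
    ∃ i₀ : Fin 4,
      (EuclideanGeometry.angle (v (i₀ - 1)) (v i₀) (v (i₀ + 1)) = 2 * Real.pi - β ∧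
        ∃ ε > 0, Metric.ball (v i₀) ε ∩ Ω =
          Metric.ball (v i₀) ε \ wedge (v i₀) (v (i₀ - 1)) (v (i₀ + 1))) ∧
      ∀ i ≠ i₀, EuclideanGeometry.angle (v (i - 1)) (v i) (v (i + 1)) < Real.pi ∧
        ∃ ε > 0, Metric.ball (v i) ε ∩ Ω =
          Metric.ball (v i) ε ∩ interior (wedge (v i) (v (i - 1)) (v (i + 1)))

open scoped ContDiff Topology

section TestFunctions

lemma tsupport_indicator_comp_symm_subset {X Y : Type*} [TopologicalSpace X] [TopologicalSpace Y]
    [T2Space Y] {f : X → ℝ} (hf : HasCompactSupport f) {e : OpenPartialHomeomorph X Y}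
    (hs : tsupport f ⊆ e.source) :
    tsupport (e.target.indicator (f ∘ e.symm)) ⊆ e '' tsupport f :=
  closure_minimal
    (fun y hy ↦ by
      have hy' := mem_of_indicator_ne_zero hy
      rw [Function.mem_support, indicator_of_mem hy'] at hy
      exact ⟨e.symm y, subset_tsupport f hy, e.right_inv hy'⟩)
    (hf.isCompact.image_of_continuousOn (e.continuousOn.mono hs)).isClosed

variable {E F : Type*} [NormedAddCommGroup E] [NormedSpace ℝ E]
  [NormedAddCommGroup F] [NormedSpace ℝ F]
  {n m : WithTop ℕ∞} {U T : Set E} {f g : E → ℝ}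

/-- `f` belongs to `C_c^n(U)`. This is the unbundled form of Mathlib's `TestFunction`, for a set `U`
that need not be open. -/
structure IsTestFunction (n : WithTop ℕ∞) (U : Set E) (f : E → ℝ) : Prop where
  contDiff : ContDiff ℝ n f
  hasCompactSupport : HasCompactSupport f
  tsupport_subset : tsupport f ⊆ U

namespace IsTestFunction

lemma mono (hf : IsTestFunction n U f) (hU : U ⊆ T) : IsTestFunction n T f :=
  ⟨hf.contDiff, hf.hasCompactSupport, hf.tsupport_subset.trans hU⟩

lemma of_le (hf : IsTestFunction n U f) (hmn : m ≤ n) : IsTestFunction m U f :=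
  ⟨hf.contDiff.of_le hmn, hf.hasCompactSupport, hf.tsupport_subset⟩

lemma continuous (hf : IsTestFunction n U f) : Continuous f := hf.contDiff.continuous

lemma eq_zero_of_notMem (hf : IsTestFunction n U f) {x : E} (hx : x ∉ U) : f x = 0 :=
  image_eq_zero_of_notMem_tsupport fun h ↦ hx (hf.tsupport_subset h)

lemma fderiv_eq_zero (hf : IsTestFunction n U f) {x : E} (hx : x ∉ U) : fderiv ℝ f x = 0 :=
  fderiv_of_notMem_tsupport ℝ fun h ↦ hx (hf.tsupport_subset h)

lemma mul_contDiffOn (hf : IsTestFunction n U f) (hU : IsOpen U) (hg : ContDiffOn ℝ n g U) :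
    IsTestFunction n U (f * g) where
  contDiff := contDiff_iff_contDiffAt.2 fun x ↦ by
    by_cases hx : x ∈ tsupport f
    · exact hf.contDiff.contDiffAt.mul
        (hg.contDiffAt (hU.mem_nhds (hf.tsupport_subset hx)))
    · refine (contDiffAt_const (c := (0 : ℝ))).congr_of_eventuallyEq ?_
      filter_upwards [notMem_tsupport_iff_eventuallyEq.1 hx] with y hy
      simp [hy]
  hasCompactSupport := hf.hasCompactSupport.mul_right
  tsupport_subset := (tsupport_mul_subset_left (f := f)).trans hf.tsupport_subset

lemma integrable [MeasurableSpace E] [BorelSpace E] {μ : Measure E}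
    [IsFiniteMeasureOnCompacts μ] (hf : IsTestFunction n U f) : Integrable f μ :=
  hf.continuous.integrable_of_hasCompactSupport hf.hasCompactSupport

lemma integrable_mul_sq [MeasurableSpace E] [BorelSpace E] {μ : Measure E}
    [IsFiniteMeasureOnCompacts μ] (hf : IsTestFunction n U f) (hU : IsOpen U)
    (hg : ContinuousOn g U) : Integrable (fun x ↦ g x * f x ^ 2) μ := by
  have hf0 := hf.of_le zero_le
  refine (hf0.mul_contDiffOn hU ((contDiffOn_zero.2 hg).mul
    hf0.contDiff.contDiffOn)).integrable.congr (.of_forall fun x ↦ ?_)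
  simp only [Pi.mul_apply]
  ring

lemma integrable_sq [MeasurableSpace E] [BorelSpace E] {μ : Measure E}
    [IsFiniteMeasureOnCompacts μ] (hf : IsTestFunction n U f) :
    Integrable (fun x ↦ f x ^ 2) μ := by
  simpa using (hf.mono (subset_univ U)).integrable_mul_sq isOpen_univ
    (continuousOn_const (c := (1 : ℝ)))

lemma comp_homeomorph {U : Set F} {f : F → ℝ} (hf : IsTestFunction n U f) (e : E ≃ₜ F)
    (he : ContDiff ℝ n e) : IsTestFunction n (e ⁻¹' U) (f ∘ e) where
  contDiff := hf.contDiff.comp he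
  hasCompactSupport := hf.hasCompactSupport.comp_homeomorph e
  tsupport_subset := by
    rw [tsupport_comp_eq_preimage]
    exact preimage_mono hf.tsupport_subset

lemma indicator_comp_symm (hf : IsTestFunction n U f) {e : OpenPartialHomeomorph E F}
    (hU : U ⊆ e.source) (he : ContDiffOn ℝ n e.symm e.target) :
    IsTestFunction n (e '' U) (e.target.indicator (f ∘ e.symm)) := by
  have hs : tsupport f ⊆ e.source := hf.tsupport_subset.trans hU
  have ht := tsupport_indicator_comp_symm_subset hf.hasCompactSupport hs
  have hK : IsCompact (e '' tsupport f) :=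
    hf.hasCompactSupport.isCompact.image_of_continuousOn (e.continuousOn.mono hs)
  refine ⟨contDiff_iff_contDiffAt.2 fun y ↦ ?_, hK.of_isClosed_subset isClosed_closure ht,
    ht.trans (image_mono hf.tsupport_subset)⟩
  by_cases hy : y ∈ e.target
  · refine (hf.contDiff.contDiffAt.comp y
      (he.contDiffAt (e.open_target.mem_nhds hy))).congr_of_eventuallyEq ?_
    filter_upwards [e.open_target.mem_nhds hy] with z hz
    rw [indicator_of_mem hz]
  · refine (contDiffAt_const (c := (0 : ℝ))).congr_of_eventuallyEq
      (notMem_tsupport_iff_eventuallyEq.1 fun h ↦ hy ?_)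
    obtain ⟨x, hx, rfl⟩ := ht h
    exact e.map_source (hs hx)

end IsTestFunction

section

variable [MeasureSpace E] {V W : E → ℝ} {c : ℝ}

/-- The weighted Hardy inequality `c ∫ V f² ≤ ∫ |∇f|²` fails for some `f ∈ C_c^n(U)`. The gradient
enters through the norm of `fderiv`. -/
def HardyFails (n : WithTop ℕ∞) (U : Set E) (V : E → ℝ) (c : ℝ) : Prop :=
  ∃ f, IsTestFunction n U f ∧ ∫ x, ‖fderiv ℝ f x‖ ^ 2 < c * ∫ x, V x * f x ^ 2

namespace HardyFails

lemma mono (h : HardyFails n U V c) (hU : U ⊆ T) : HardyFails n T V c :=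
  let ⟨f, hf, hlt⟩ := h
  ⟨f, hf.mono hU, hlt⟩

lemma mono_weight [BorelSpace E] [IsFiniteMeasureOnCompacts (volume : Measure E)]
    (h : HardyFails n U V c) (hc : 0 ≤ c) (hU : IsOpen U) (hV : ContinuousOn V U)
    (hW : ContinuousOn W U) (hVW : ∀ x ∈ U, V x ≤ W x) : HardyFails n U W c := by
  obtain ⟨f, hf, hlt⟩ := h
  refine ⟨f, hf, hlt.trans_le ?_⟩
  refine mul_le_mul_of_nonneg_left (integral_mono (hf.integrable_mul_sq hU hV)
    (hf.integrable_mul_sq hU hW) fun x ↦ ?_) hc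
  by_cases hx : x ∈ U
  · exact mul_le_mul_of_nonneg_right (hVW x hx) (sq_nonneg _)
  · simp [hf.eq_zero_of_notMem hx]

end HardyFails

end

end TestFunctions

section HardyInequality

variable {n : WithTop ℕ∞} {U : Set ℝ} {V : ℝ → ℝ} {a b c ε η : ℝ}

lemma integral_comp_exp {E : Type*} [NormedAddCommGroup E] [NormedSpace ℝ E] (g : ℝ → E) :
    ∫ t, exp t • g (exp t) = ∫ x in Ioi 0, g x := by
  rw [← range_exp, ← image_univ, integral_image_eq_integral_abs_deriv_smul MeasurableSet.univ
    (fun t _ ↦ (hasDerivAt_exp t).hasDerivWithinAt) exp_injective.injOn, setIntegral_univ]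
  simp

protected lemma IsTestFunction.deriv {f : ℝ → ℝ} (hf : IsTestFunction 1 U f) :
    IsTestFunction 0 U (deriv f) where
  contDiff := contDiff_zero.2 (hf.contDiff.continuous_deriv le_rfl)
  hasCompactSupport := hf.hasCompactSupport.deriv
  tsupport_subset := tsupport_deriv_subset.trans hf.tsupport_subset

lemma IsTestFunction.hasDerivAt {f : ℝ → ℝ} (hf : IsTestFunction 1 U f) (x : ℝ) :
    HasDerivAt f (deriv f x) x :=
  (hf.contDiff.differentiable one_ne_zero x).hasDerivAt

lemma IsTestFunction.integral_deriv {f : ℝ → ℝ} (hf : IsTestFunction 1 U f) :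
    ∫ x, deriv f x = 0 :=
  integral_eq_zero_of_hasDerivAt_of_integrable hf.hasDerivAt hf.deriv.integrable hf.integrable

lemma IsTestFunction.mul_contDiff {f g : ℝ → ℝ} (hf : IsTestFunction n U f) (hg : ContDiff ℝ n g) :
    IsTestFunction n U (f * g) where
  contDiff := hf.contDiff.mul hg
  hasCompactSupport := hf.hasCompactSupport.mul_right
  tsupport_subset := (tsupport_mul_subset_left (f := f)).trans hf.tsupport_subset

lemma IsTestFunction.integral_mul_deriv {f : ℝ → ℝ} (hf : IsTestFunction 1 U f) :
    ∫ x, f x * deriv f x = 0 := by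
  have h := (hf.mul_contDiff hf.contDiff).integral_deriv
  simp_rw [fun x ↦ ((hf.hasDerivAt x).mul (hf.hasDerivAt x)).deriv, mul_comm (deriv f _),
    ← two_mul, integral_const_mul] at h
  linarith

lemma IsTestFunction.integral_exp_half_deriv_sq {χ : ℝ → ℝ} (hχ : IsTestFunction 1 U χ) :
    ∫ t, exp (-t) * deriv (fun t ↦ χ t * exp (t / 2)) t ^ 2 =
      (∫ t, deriv χ t ^ 2) + 1 / 4 * ∫ t, χ t ^ 2 := by
  have hderiv (t : ℝ) : deriv (fun t ↦ χ t * exp (t / 2)) t =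
      (deriv χ t + χ t / 2) * exp (t / 2) := by
    refine ((hχ.hasDerivAt t).mul ((hasDerivAt_id t).div_const 2).exp).deriv.trans ?_
    simp only [id]
    ring
  have hexp (t : ℝ) : exp (-t) * exp (t / 2) ^ 2 = 1 := by
    rw [← exp_nat_mul, ← exp_add]
    simp
    ring
  have hmul : Integrable fun t ↦ χ t * deriv χ t :=
    ((hχ.of_le zero_le).mul_contDiff hχ.deriv.contDiff).integrable
  calc ∫ t, exp (-t) * deriv (fun t ↦ χ t * exp (t / 2)) t ^ 2
      = ∫ t, deriv χ t ^ 2 + χ t * deriv χ t + 1 / 4 * χ t ^ 2 := by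
        congr! 2 with t
        rw [hderiv]
        linear_combination (deriv χ t + χ t / 2) ^ 2 * hexp t
    _ = (∫ t, deriv χ t ^ 2) + 1 / 4 * ∫ t, χ t ^ 2 := by
        rw [integral_add (by exact hχ.deriv.integrable_sq.add hmul) (hχ.integrable_sq.const_mul _),
          integral_add hχ.deriv.integrable_sq hmul,
          hχ.integral_mul_deriv, integral_const_mul, add_zero]

lemma hardyFails_iff_deriv : HardyFails n U V c ↔
    ∃ f, IsTestFunction n U f ∧ ∫ x, deriv f x ^ 2 < c * ∫ x, V x * f x ^ 2 := by
  simp_rw [HardyFails, ← norm_deriv_eq_norm_fderiv, norm_eq_abs, sq_abs]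

lemma HardyFails.comp_mul_add (h : HardyFails n U V c) (ha : a ≠ 0) (b : ℝ) :
    HardyFails n ((a * · + b) ⁻¹' U) (fun x ↦ V (a * x + b)) (a ^ 2 * c) := by
  obtain ⟨f, hf, hlt⟩ := hardyFails_iff_deriv.1 h
  have hsub (g : ℝ → ℝ) : ∫ x, g (a * x + b) = |a⁻¹| * ∫ x, g x := by
    rw [Measure.integral_comp_mul_left (fun x ↦ g (x + b)), integral_add_right_eq_self g,
      smul_eq_mul]
  have hderiv (x : ℝ) : deriv (fun x ↦ f (a * x + b)) x = a * deriv f (a * x + b) := by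
    rw [deriv_comp_mul_left a (fun x ↦ f (x + b)), deriv_comp_add_const, smul_eq_mul]
  refine hardyFails_iff_deriv.2 ⟨_, hf.comp_homeomorph (affineHomeomorph a b ha)
    ((contDiff_const.mul contDiff_id).add contDiff_const), ?_⟩
  calc ∫ x, deriv (fun x ↦ f (a * x + b)) x ^ 2
      = a ^ 2 * |a⁻¹| * ∫ x, deriv f x ^ 2 := by
        simp_rw [hderiv, mul_pow]
        rw [integral_const_mul, hsub fun x ↦ deriv f x ^ 2, mul_assoc]
    _ < a ^ 2 * |a⁻¹| * (c * ∫ x, V x * f x ^ 2) := by gcongr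
    _ = a ^ 2 * c * ∫ x, V (a * x + b) * f (a * x + b) ^ 2 := by
        rw [hsub fun x ↦ V x * f x ^ 2]; ring

lemma exists_hardyFails_one_Iio_zero : ∃ c > 0, HardyFails ∞ (Iio (0 : ℝ)) (fun _ ↦ 1) c := by
  let χ : ContDiffBump (-3 : ℝ) := default
  have hpos : 0 < ∫ x, 1 * χ x ^ 2 := by
    refine Continuous.integral_pos_of_hasCompactSupport_nonneg_nonzero (x := -3)
      (continuous_const.mul (χ.continuous.pow 2)) ?_ (fun x ↦ by positivity) ?_
    · simp_rw [sq]
      exact (χ.hasCompactSupport.mul_right).mul_left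
    · simp [χ.one_of_mem_closedBall (Metric.mem_closedBall_self χ.rIn_pos.le)]
  refine ⟨(∫ x, deriv χ x ^ 2) / (∫ x, 1 * χ x ^ 2) + 1, by positivity,
    hardyFails_iff_deriv.2 ⟨χ, ⟨χ.contDiff, χ.hasCompactSupport, ?_⟩, ?_⟩⟩
  · rw [χ.tsupport_eq, Real.closedBall_eq_Icc]
    intro x hx
    have : χ.rOut = 2 := rfl
    rw [mem_Iio]
    linarith [hx.2]
  · rw [add_mul, div_mul_cancel₀ _ hpos.ne']
    linarith

lemma hardyFails_one_Iio (hη : 0 < η) (b : ℝ) : HardyFails ∞ (Iio b) (fun _ ↦ 1) η := by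
  obtain ⟨c, hc, h⟩ := exists_hardyFails_one_Iio_zero
  have ha : 0 < √(η / c) := sqrt_pos.2 (by positivity)
  convert h.comp_mul_add ha.ne' (-(√(η / c) * b)) using 1
  · ext x
    simp [ha]
  · rw [sq_sqrt (by positivity)]
    field_simp

-- In logarithmic coordinates the Hardy quotient on the half-line is a translation-invariant one.
lemma hardyFails_inv_sq_Ioo (hc : 1 / 4 < c) (hε : 0 < ε) :
    HardyFails ∞ (Ioo 0 ε) (fun x ↦ (x ^ 2)⁻¹) c := by
  obtain ⟨χ, hχ, hlt⟩ := hardyFails_iff_deriv.1 (hardyFails_one_Iio (sub_pos.2 hc) (log ε))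
  simp only [one_mul] at hlt
  have hχ1 := hχ.of_le (m := 1) (by simp)
  set h : ℝ → ℝ := fun t ↦ χ t * exp (t / 2)
  have hh : IsTestFunction ∞ (Iio (log ε)) h := hχ.mul_contDiff (by fun_prop)
  set f : ℝ → ℝ := (Ioi 0).indicator (h ∘ log)
  have hf : IsTestFunction ∞ (Ioo 0 ε) f := by
    have := hh.indicator_comp_symm (e := expPartialHomeomorph) (subset_univ _)
      (contDiffOn_log.mono fun x hx ↦ (ne_of_gt hx : x ≠ 0))
    rwa [show expPartialHomeomorph '' Iio (log ε) = Ioo 0 ε by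
      simp [image_exp_Iio, exp_log hε]] at this
  have hfexp (t : ℝ) : f (exp t) = h t := by
    simp [f, indicator_of_mem (mem_Ioi.2 (exp_pos t))]
  have hf1 := hf.of_le (m := 1) (by simp)
  have hderiv (t : ℝ) : deriv f (exp t) * exp t = deriv h t := by
    rw [← ((hf1.hasDerivAt _).comp t (hasDerivAt_exp t)).deriv]
    congr! 1
    exact funext hfexp
  have hint (g : ℝ → ℝ) (hg : ∀ x ∉ Ioo 0 ε, g x = 0) :
      ∫ x, g x = ∫ t, exp t * g (exp t) := by
    simp only [← smul_eq_mul]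
    rw [integral_comp_exp]
    exact (setIntegral_eq_integral_of_forall_compl_eq_zero fun x hx ↦
      hg x fun h ↦ hx h.1).symm
  refine hardyFails_iff_deriv.2 ⟨f, hf, ?_⟩
  calc ∫ x, deriv f x ^ 2 = ∫ t, exp (-t) * deriv h t ^ 2 := by
        rw [hint _ fun x hx ↦ by simp [hf1.deriv.eq_zero_of_notMem hx]]
        congr! 2 with t
        rw [← hderiv, exp_neg]
        field_simp
    _ = (∫ t, deriv χ t ^ 2) + 1 / 4 * ∫ t, χ t ^ 2 := hχ1.integral_exp_half_deriv_sq
    _ < c * ∫ t, χ t ^ 2 := by linarith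
    _ = c * ∫ x, (x ^ 2)⁻¹ * f x ^ 2 := by
        rw [hint (fun x ↦ (x ^ 2)⁻¹ * f x ^ 2) fun x hx ↦ by simp [hf.eq_zero_of_notMem hx]]
        congr! 3 with t
        rw [hfexp, mul_pow, ← exp_nat_mul (t / 2)]
        push_cast
        rw [mul_div_cancel₀ t two_ne_zero]
        field_simp

end HardyInequality

section CoshIntegral

variable {a b p q x y : ℝ}

/-- The integral `∫ (cosh y + x)^(-p) dy` (an associated Legendre function in disguise). It is
finite for `p > 0` and `x > -1`. -/
noncomputable def coshIntegral (p x : ℝ) : ℝ := ∫ y, (cosh y + x) ^ (-p)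

lemma integrable_exp_neg_mul_abs (hp : 0 < p) : Integrable fun y ↦ exp (-p * |y|) := by
  rw [← integrableOn_univ, ← Iic_union_Ioi (a := (0 : ℝ))]
  refine IntegrableOn.union ?_ ?_
  · refine (integrableOn_exp_mul_Iic hp 0).congr_fun (fun y hy ↦ ?_) measurableSet_Iic
    simp [abs_of_nonpos (mem_Iic.1 hy)]
  · refine (exp_neg_integrableOn_Ioi 0 hp).congr_fun (fun y hy ↦ ?_) measurableSet_Ioi
    simp [abs_of_pos (mem_Ioi.1 hy)]

lemma mul_exp_abs_le_cosh_add (hx : -1 ≤ x) (y : ℝ) :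
    min 1 (1 + x) / 2 * exp |y| ≤ cosh y + x := by
  have hcosh : exp |y| / 2 ≤ cosh y := by
    rw [← cosh_abs, cosh_eq]
    linarith [exp_pos (-|y|)]
  have hone : 1 ≤ cosh y := one_le_cosh y
  have hmin : 0 ≤ min 1 (1 + x) := le_min zero_le_one (by linarith)
  calc min 1 (1 + x) / 2 * exp |y| = min 1 (1 + x) * (exp |y| / 2) := by ring
    _ ≤ min 1 (1 + x) * cosh y := by gcongr
    _ ≤ cosh y + x := by
        rcases le_total 0 x with h | h
        · rw [min_eq_left (by linarith)]
          linarith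
        · rw [min_eq_right (by linarith)]
          nlinarith

lemma cosh_add_pos (hx : -1 < x) (y : ℝ) : 0 < cosh y + x := by
  linarith [one_le_cosh y]

lemma cosh_add_rpow_neg_le (hp : 0 ≤ p) (ha : -1 < a) (hax : a ≤ x) (y : ℝ) :
    (cosh y + x) ^ (-p) ≤ (min 1 (1 + a) / 2) ^ (-p) * exp (-p * |y|) := by
  have hκ : 0 < min 1 (1 + a) / 2 := half_pos (lt_min one_pos (by linarith))
  calc (cosh y + x) ^ (-p) ≤ (min 1 (1 + a) / 2 * exp |y|) ^ (-p) :=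
        rpow_le_rpow_of_nonpos (by positivity)
          ((mul_exp_abs_le_cosh_add ha.le y).trans (by gcongr)) (by linarith)
    _ = (min 1 (1 + a) / 2) ^ (-p) * exp (-p * |y|) := by
        rw [mul_rpow hκ.le (exp_pos _).le, ← exp_mul, mul_comm |y|]

lemma continuous_cosh_add_rpow (hx : -1 < x) (q : ℝ) : Continuous fun y ↦ (cosh y + x) ^ q :=
  Continuous.rpow_const (by fun_prop) fun y ↦ .inl (cosh_add_pos hx y).ne'

lemma integrable_cosh_add_rpow_neg (hp : 0 < p) (hx : -1 < x) :
    Integrable fun y ↦ (cosh y + x) ^ (-p) :=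
  ((integrable_exp_neg_mul_abs hp).const_mul _).mono'
    (continuous_cosh_add_rpow hx _).aestronglyMeasurable
    (.of_forall fun y ↦ by
      rw [norm_of_nonneg (rpow_nonneg (cosh_add_pos hx y).le _)]
      exact cosh_add_rpow_neg_le hp.le hx le_rfl y)

lemma hasDerivAt_coshIntegral (hp : 0 < p) (hx : -1 < x) :
    HasDerivAt (coshIntegral p) (-(p * coshIntegral (p + 1) x)) x := by
  obtain ⟨a, ha, hax⟩ := exists_between hx
  have hderiv := (hasDerivAt_integral_of_dominated_loc_of_deriv_le (μ := volume)
    (F := fun x y ↦ (cosh y + x) ^ (-p)) (F' := fun x y ↦ -p * (cosh y + x) ^ (-(p + 1)))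
    (bound := fun y ↦ p * ((min 1 (1 + a) / 2) ^ (-(p + 1)) * exp (-(p + 1) * |y|)))
    (Ioi_mem_nhds hax) ?_ (integrable_cosh_add_rpow_neg hp hx)
    ((continuous_cosh_add_rpow hx _).const_mul _).aestronglyMeasurable ?_
    (((integrable_exp_neg_mul_abs (by linarith)).const_mul _).const_mul _) ?_).2
  · rwa [integral_const_mul, neg_mul] at hderiv
  · filter_upwards [Ioi_mem_nhds hx] with z hz
    exact (continuous_cosh_add_rpow hz _).aestronglyMeasurable
  · refine .of_forall fun y z hz ↦ ?_
    rw [norm_mul, norm_neg, norm_of_nonneg hp.le,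
      norm_of_nonneg (rpow_nonneg (cosh_add_pos (ha.trans hz) y).le _)]
    exact mul_le_mul_of_nonneg_left (cosh_add_rpow_neg_le (by linarith) ha (le_of_lt hz) y) hp.le
  · refine .of_forall fun y z hz ↦ ?_
    convert! ((hasDerivAt_id z).const_add (cosh y)).rpow_const (p := -p)
      (.inl (cosh_add_pos (ha.trans hz) y).ne') using 1
    rw [show -(p + 1) = -p - 1 by ring, id]
    ring

lemma hasDerivAt_sinh_mul_cosh_add_rpow (hx : -1 < x) (p y : ℝ) :
    HasDerivAt (fun y ↦ sinh y * (cosh y + x) ^ (-(p + 1)))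
      (-p * (cosh y + x) ^ (-p) + (2 * p + 1) * x * (cosh y + x) ^ (-(p + 1))
        + (p + 1) * (1 - x ^ 2) * (cosh y + x) ^ (-(p + 2))) y := by
  have hpos := cosh_add_pos hx y
  have hmul (q : ℝ) : (cosh y + x) ^ (q + 1) = (cosh y + x) ^ q * (cosh y + x) :=
    rpow_add_one hpos.ne' q
  convert! (hasDerivAt_sinh y).mul (((hasDerivAt_cosh y).add_const x).rpow_const
    (p := -(p + 1)) (.inl hpos.ne')) using 1
  rw [show -(p + 1) - 1 = -(p + 2) by ring, show -p = -(p + 2) + 1 + 1 by ring,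
    show -(p + 1) = -(p + 2) + 1 by ring, hmul, hmul]
  linear_combination (p + 1) * (cosh y + x) ^ (-(p + 2)) * sinh_sq y

lemma norm_sinh_mul_cosh_add_rpow_le (hx : -1 < x) (p y : ℝ) :
    ‖sinh y * (cosh y + x) ^ (-(p + 1))‖ ≤
      (cosh y + x) ^ (-p) + |x| * (cosh y + x) ^ (-(p + 1)) := by
  have hpos := cosh_add_pos hx y
  have hsinh : |sinh y| ≤ cosh y + x + |x| := by
    have : |sinh y| ≤ cosh y :=
      abs_le.2 ⟨by linarith [exp_pos y, cosh_add_sinh y], (sinh_lt_cosh y).le⟩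
    linarith [neg_abs_le x]
  rw [norm_mul, norm_eq_abs, norm_of_nonneg (rpow_nonneg hpos.le _)]
  refine (mul_le_mul_of_nonneg_right hsinh (rpow_nonneg hpos.le _)).trans_eq ?_
  rw [show -p = -(p + 1) + 1 by ring, rpow_add_one hpos.ne']
  ring

-- Integrate the derivative of `sinh y (cosh y + x)^(-(p + 1))` over the line.
lemma coshIntegral_recurrence (hp : 0 < p) (hx : -1 < x) :
    (p + 1) * (1 - x ^ 2) * coshIntegral (p + 2) x =
      p * coshIntegral p x - (2 * p + 1) * x * coshIntegral (p + 1) x := by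
  have hI := integrable_cosh_add_rpow_neg hp hx
  have hI1 := integrable_cosh_add_rpow_neg (add_pos hp one_pos) hx
  have hI2 := integrable_cosh_add_rpow_neg (add_pos hp two_pos) hx
  have hsinh : Integrable fun y ↦ sinh y * (cosh y + x) ^ (-(p + 1)) :=
    (hI.add (hI1.const_mul |x|)).mono'
      (continuous_sinh.mul (continuous_cosh_add_rpow hx _)).aestronglyMeasurable
      (.of_forall (norm_sinh_mul_cosh_add_rpow_le hx p))
  have h0 := integral_eq_zero_of_hasDerivAt_of_integrable
    (hasDerivAt_sinh_mul_cosh_add_rpow hx p)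
    (((hI.const_mul _).add (hI1.const_mul _)).add (hI2.const_mul _)) hsinh
  rw [integral_add (by exact (hI.const_mul _).add (hI1.const_mul _)) (hI2.const_mul _),
    integral_add (hI.const_mul _) (hI1.const_mul _)] at h0
  simp only [integral_const_mul] at h0
  unfold coshIntegral
  linear_combination h0

lemma coshIntegral_le_zero (hp : 0 < p) (hx : 0 ≤ x) : coshIntegral p x ≤ coshIntegral p 0 :=
  integral_mono (integrable_cosh_add_rpow_neg hp (by linarith))
    (integrable_cosh_add_rpow_neg hp (by norm_num)) fun y ↦
      rpow_le_rpow_of_nonpos (cosh_add_pos (by norm_num) y) (by gcongr) (by linarith)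

lemma beta_eq_integral_sigmoid (ha : 0 < a) (hb : 0 < b) :
    ProbabilityTheory.beta a b = ∫ t, sigmoid t ^ a * sigmoid (-t) ^ b := by
  have hreal : Complex.betaIntegral a b =
      ((∫ u in Ioo (0 : ℝ) 1, u ^ (a - 1) * (1 - u) ^ (b - 1) : ℝ) : ℂ) := by
    rw [Complex.betaIntegral, intervalIntegral.integral_of_le zero_le_one,
      ← integral_Ioc_eq_integral_Ioo, ← integral_complex_ofReal]
    refine setIntegral_congr_fun measurableSet_Ioc fun u hu ↦ ?_
    simp only [Complex.ofReal_mul, Complex.ofReal_cpow hu.1.le,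
      Complex.ofReal_cpow (sub_nonneg.2 hu.2)]
    push_cast
    rfl
  rw [ProbabilityTheory.beta_eq_betaIntegralReal a b ha hb, hreal, Complex.ofReal_re,
    ← range_sigmoid, ← image_univ, integral_image_eq_integral_abs_deriv_smul MeasurableSet.univ
    (fun t _ ↦ (hasDerivAt_sigmoid t).hasDerivWithinAt) sigmoid_injective.injOn, setIntegral_univ]
  congr! 2 with t
  have h := sigmoid_pos t
  have h' := sigmoid_pos (-t)
  rw [← sigmoid_neg, abs_of_pos (mul_pos h h'), smul_eq_mul, rpow_sub_one h.ne',
    rpow_sub_one h'.ne']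
  field_simp

lemma sigmoid_two_mul_mul_sigmoid_neg (y : ℝ) :
    sigmoid (2 * y) * sigmoid (-(2 * y)) = (2 * cosh y) ^ (-2 : ℝ) := by
  have hexp : exp y * exp (-y) = 1 := by rw [← exp_add]; simp
  rw [rpow_neg (by positivity), rpow_two, sigmoid_def, sigmoid_def, cosh_eq, ← mul_inv]
  congr 1
  rw [show -(2 * y) = -y + -y by ring, neg_add, neg_neg, exp_add, exp_add]
  linear_combination (exp y * exp (-y) - 1) * hexp

lemma coshIntegral_zero (hp : 0 < p) :
    coshIntegral p 0 = 2 ^ (p - 1) * ProbabilityTheory.beta (p / 2) (p / 2) := by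
  have hint (y : ℝ) : sigmoid (2 * y) ^ (p / 2) * sigmoid (-(2 * y)) ^ (p / 2) =
      2 ^ (-p) * (cosh y + 0) ^ (-p) := by
    rw [← mul_rpow (sigmoid_pos _).le (sigmoid_pos _).le, sigmoid_two_mul_mul_sigmoid_neg,
      ← rpow_mul (by positivity), add_zero, ← mul_rpow (by positivity) (by positivity)]
    congr 1
    ring
  have hsub := Measure.integral_comp_mul_left
    (fun t ↦ sigmoid t ^ (p / 2) * sigmoid (-t) ^ (p / 2)) 2
  simp_rw [hint, integral_const_mul] at hsub
  rw [beta_eq_integral_sigmoid (half_pos hp) (half_pos hp), coshIntegral]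
  rw [rpow_neg zero_le_two, abs_of_pos (by norm_num), smul_eq_mul] at hsub
  rw [rpow_sub_one two_ne_zero]
  field_simp at hsub ⊢
  linear_combination hsub

lemma coshIntegral_zero_pos (hp : 0 < p) : 0 < coshIntegral p 0 := by
  rw [coshIntegral_zero hp]
  exact mul_pos (by positivity) (ProbabilityTheory.beta_pos (half_pos hp) (half_pos hp))

lemma mul_coshIntegral_add_one_zero (hp : 0 < p) :
    p * coshIntegral (p + 1) 0 =
      2 * (Gamma ((p + 1) / 2) / Gamma (p / 2)) ^ 2 * coshIntegral p 0 := by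
  rw [coshIntegral_zero hp, coshIntegral_zero (by linarith), ProbabilityTheory.beta,
    ProbabilityTheory.beta, add_halves, add_halves, Gamma_add_one hp.ne', add_sub_cancel_right,
    rpow_sub_one two_ne_zero]
  field_simp

end CoshIntegral

section EdgeProfile

variable {p s : ℝ}

/-- The solution `cos^p s ∫ (cosh y + sin s)^(-p) dy` of `ψ'' = -p(1 - p) ψ / cos² s` that vanishes
to order `p` at `s = π/2`. -/
noncomputable def edgeProfile (p s : ℝ) : ℝ := cos s ^ p * coshIntegral p (sin s)

/-- The derivative of `edgeProfile p`. -/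
noncomputable def edgeProfileDeriv (p s : ℝ) : ℝ :=
  -p * (sin s * cos s ^ (p - 1) * coshIntegral p (sin s)
    + cos s ^ (p + 1) * coshIntegral (p + 1) (sin s))

lemma edgeProfile_zero (p : ℝ) : edgeProfile p 0 = coshIntegral p 0 := by
  simp [edgeProfile]

lemma edgeProfileDeriv_zero (p : ℝ) : edgeProfileDeriv p 0 = -(p * coshIntegral (p + 1) 0) := by
  simp [edgeProfileDeriv]

lemma hasDerivAt_cos_rpow (hs : 0 < cos s) (q : ℝ) :
    HasDerivAt (fun s ↦ cos s ^ q) (-q * sin s * cos s ^ (q - 1)) s := by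
  convert! (hasDerivAt_cos s).rpow_const (p := q) (.inl hs.ne') using 1
  ring

lemma neg_one_lt_sin_of_cos_pos (hs : 0 < cos s) : -1 < sin s := by
  nlinarith [sin_sq_add_cos_sq s]

lemma hasDerivAt_coshIntegral_sin (hp : 0 < p) (hs : 0 < cos s) :
    HasDerivAt (fun s ↦ coshIntegral p (sin s)) (-(p * coshIntegral (p + 1) (sin s)) * cos s) s :=
  (hasDerivAt_coshIntegral hp (neg_one_lt_sin_of_cos_pos hs)).comp s (hasDerivAt_sin s)

lemma hasDerivAt_edgeProfile (hp : 0 < p) (hs : 0 < cos s) :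
    HasDerivAt (edgeProfile p) (edgeProfileDeriv p s) s := by
  refine ((hasDerivAt_cos_rpow hs p).mul (hasDerivAt_coshIntegral_sin hp hs)).congr_deriv ?_
  rw [edgeProfileDeriv, rpow_add_one hs.ne']
  ring

lemma hasDerivAt_edgeProfileDeriv (hp : 0 < p) (hs : 0 < cos s) :
    HasDerivAt (edgeProfileDeriv p) (-(p * (1 - p)) * ((cos s ^ 2)⁻¹ * edgeProfile p s)) s := by
  have hrec := coshIntegral_recurrence hp (neg_one_lt_sin_of_cos_pos hs)
  have h1 := ((hasDerivAt_sin s).mul (hasDerivAt_cos_rpow hs (p - 1))).mul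
    (hasDerivAt_coshIntegral_sin hp hs)
  have h2 := (hasDerivAt_cos_rpow hs (p + 1)).mul
    (hasDerivAt_coshIntegral_sin (add_pos hp one_pos) hs)
  refine ((h1.add h2).const_mul (-p)).congr_deriv ?_
  rw [show p + 1 + 1 = p + 2 by ring] at *
  rw [← cos_sq' s] at hrec
  simp only [Pi.mul_apply, edgeProfile, add_sub_cancel_right, rpow_sub_one hs.ne',
    rpow_add_one hs.ne']
  have hsin := sin_sq_add_cos_sq s
  field_simp
  linear_combination cos s ^ 2 * hrec + (p - 1) * coshIntegral p (sin s) * hsin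

lemma abs_edgeProfile_le (hp : 0 < p) (hs0 : 0 ≤ s) (hs : s < π / 2) :
    |edgeProfile p s| ≤ (π / 2 - s) ^ p * coshIntegral p 0 := by
  have hsin : 0 ≤ sin s := sin_nonneg_of_nonneg_of_le_pi hs0 (by linarith [pi_pos])
  have hcos : 0 ≤ cos s := cos_nonneg_of_neg_pi_div_two_le_of_le (by linarith [pi_pos]) hs.le
  have hle : cos s ≤ π / 2 - s := by
    rw [← sin_pi_div_two_sub]
    exact sin_le (by linarith)
  have hG : 0 ≤ coshIntegral p (sin s) :=
    integral_nonneg fun y ↦ rpow_nonneg (cosh_add_pos (by linarith) y).le _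
  rw [edgeProfile, abs_of_nonneg (mul_nonneg (rpow_nonneg hcos p) hG)]
  exact mul_le_mul (rpow_le_rpow hcos hle hp.le) (coshIntegral_le_zero hp hsin) hG (by
    exact rpow_nonneg (by linarith) p)

end EdgeProfile

section AngularProfile

variable {m p t x k : ℝ}

/-- At angle `θ` from the bisector of an infinite sector of opening `2m + π ≥ π`, a point at unit
distance from the vertex has distance `cos (max (|θ| - m) 0)` to the boundary; this is the inverse
square of that distance. -/
noncomputable def angularWeight (m θ : ℝ) : ℝ := (cos (max (|θ| - m) 0) ^ 2)⁻¹

lemma cos_max_pos (hx : |x| < m + π / 2) : 0 < cos (max (|x| - m) 0) :=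
  cos_pos_of_mem_Ioo ⟨by linarith [le_max_right (|x| - m) 0, pi_pos],
    max_lt (by linarith) (by positivity)⟩

lemma continuousOn_angularWeight (m : ℝ) :
    ContinuousOn (angularWeight m) (Ioo (-(m + π / 2)) (m + π / 2)) :=
  ContinuousOn.inv₀ (by fun_prop) fun _ hx ↦ pow_ne_zero 2 (cos_max_pos (abs_lt.2 hx)).ne'

lemma hasDerivAt_ite_le {f g f' g' : ℝ → ℝ} (hf : t ≤ m → HasDerivAt f (f' t) t)
    (hg : m ≤ t → HasDerivAt g (g' t) t) (h : f m = g m) (h' : f' m = g' m) :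
    HasDerivAt (fun t ↦ if t ≤ m then f t else g t) (if t ≤ m then f' t else g' t) t := by
  rcases lt_trichotomy t m with ht | rfl | ht
  · rw [if_pos ht.le]
    refine (hf ht.le).congr_of_eventuallyEq ?_
    filter_upwards [Iio_mem_nhds ht] with y hy using if_pos (le_of_lt hy)
  · rw [if_pos le_rfl]
    have hleft : HasDerivWithinAt (fun s ↦ if s ≤ t then f s else g s) (f' t) (Iic t) t :=
      (hf le_rfl).hasDerivWithinAt.congr (fun y hy ↦ if_pos hy) (if_pos le_rfl)
    have hright : HasDerivWithinAt (fun s ↦ if s ≤ t then f s else g s) (f' t) (Ici t) t := by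
      rw [h']
      refine (hg le_rfl).hasDerivWithinAt.congr (fun y hy ↦ ?_) (by simp [h])
      rcases (mem_Ici.1 hy).eq_or_lt with rfl | hy
      · simp [h]
      · exact if_neg hy.not_ge
    simpa [Iic_union_Ici] using hleft.union hright
  · rw [if_neg ht.not_ge]
    refine (hg ht.le).congr_of_eventuallyEq ?_
    filter_upwards [Ioi_mem_nhds ht] with y hy using if_neg (not_le.2 hy)

/-- The right half of the angular profile: `cos (k t)` where the vertex is the nearest boundary
point, continued by a multiple of `edgeProfile` where an edge is nearer. -/
noncomputable def halfProfile (k m p t : ℝ) : ℝ :=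
  if t ≤ m then cos (k * t) else cos (k * m) / coshIntegral p 0 * edgeProfile p (t - m)

/-- The derivative of `halfProfile k m p` when the two branches match to first order at `m`. -/
noncomputable def halfProfileDeriv (k m p t : ℝ) : ℝ :=
  if t ≤ m then -k * sin (k * t)
  else cos (k * m) / coshIntegral p 0 * edgeProfileDeriv p (t - m)

lemma cos_sub_pos_of_mem (hmt : m ≤ t) (ht : t < m + π / 2) : 0 < cos (t - m) :=
  cos_pos_of_mem_Ioo ⟨by linarith [pi_pos], by linarith⟩

lemma hasDerivAt_halfProfile (hp : 0 < p) (ht : t < m + π / 2)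
    (hmatch : p * coshIntegral (p + 1) 0 * cos (k * m) = k * sin (k * m) * coshIntegral p 0) :
    HasDerivAt (halfProfile k m p) (halfProfileDeriv k m p t) t := by
  have hG := (coshIntegral_zero_pos hp).ne'
  refine hasDerivAt_ite_le (f := fun t ↦ cos (k * t)) (f' := fun t ↦ -k * sin (k * t))
    (g := fun t ↦ cos (k * m) / coshIntegral p 0 * edgeProfile p (t - m))
    (g' := fun t ↦ cos (k * m) / coshIntegral p 0 * edgeProfileDeriv p (t - m))
    (fun _ ↦ ?_) (fun hmt ↦ ?_) ?_ ?_
  · refine ((hasDerivAt_id t).const_mul k).cos.congr_deriv ?_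
    simp only [id]
    ring
  · exact ((hasDerivAt_edgeProfile hp (cos_sub_pos_of_mem hmt ht)).comp_sub_const t m).const_mul _
  · simp only [sub_self, edgeProfile_zero]
    field_simp
  · simp only [sub_self, edgeProfileDeriv_zero]
    field_simp
    linear_combination hmatch

lemma angularWeight_of_le (ht0 : 0 ≤ t) (ht : t ≤ m) : angularWeight m t = 1 := by
  simp [angularWeight, abs_of_nonneg ht0, ht]

lemma angularWeight_of_ge (ht0 : 0 ≤ t) (ht : m ≤ t) :
    angularWeight m t = (cos (t - m) ^ 2)⁻¹ := by
  rw [angularWeight, abs_of_nonneg ht0, max_eq_left (sub_nonneg.2 ht)]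

lemma hasDerivAt_halfProfileDeriv (hp : 0 < p) (ht0 : 0 ≤ t) (ht : t < m + π / 2)
    (hk : k ^ 2 = p * (1 - p))
    (hmatch : p * coshIntegral (p + 1) 0 * cos (k * m) = k * sin (k * m) * coshIntegral p 0) :
    HasDerivAt (halfProfileDeriv k m p) (-k ^ 2 * (angularWeight m t * halfProfile k m p t)) t := by
  have hG := (coshIntegral_zero_pos hp).ne'
  refine (hasDerivAt_ite_le (f := fun t ↦ -k * sin (k * t)) (f' := fun t ↦ -k ^ 2 * cos (k * t))
    (g := fun t ↦ cos (k * m) / coshIntegral p 0 * edgeProfileDeriv p (t - m))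
    (g' := fun t ↦ cos (k * m) / coshIntegral p 0 *
      (-(p * (1 - p)) * ((cos (t - m) ^ 2)⁻¹ * edgeProfile p (t - m))))
    (fun _ ↦ ?_) (fun hmt ↦ ?_) ?_ ?_).congr_deriv ?_
  · refine (((hasDerivAt_id t).const_mul k).sin.const_mul (-k)).congr_deriv ?_
    simp only [id]
    ring
  · exact ((hasDerivAt_edgeProfileDeriv hp (cos_sub_pos_of_mem hmt ht)).comp_sub_const t
      m).const_mul _
  · simp only [sub_self, edgeProfileDeriv_zero]
    field_simp
    linear_combination hmatch
  · simp only [sub_self, edgeProfile_zero, cos_zero, hk]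
    field_simp
  · unfold halfProfile
    split_ifs with htm
    · rw [angularWeight_of_le ht0 htm, one_mul]
    · rw [angularWeight_of_ge ht0 (not_le.1 htm).le, hk]
      ring

lemma abs_halfProfile_le (hp : 0 < p) (ht : t < m + π / 2) :
    |halfProfile k m p t| ≤ (m + π / 2 - t) ^ p := by
  unfold halfProfile
  split_ifs with htm
  · exact (abs_cos_le_one _).trans (one_le_rpow (by linarith [two_le_pi]) hp.le)
  · have hG := coshIntegral_zero_pos hp
    calc |cos (k * m) / coshIntegral p 0 * edgeProfile p (t - m)|
        = |cos (k * m)| / coshIntegral p 0 * |edgeProfile p (t - m)| := by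
          rw [abs_mul, abs_div, abs_of_pos hG]
      _ ≤ 1 / coshIntegral p 0 * ((π / 2 - (t - m)) ^ p * coshIntegral p 0) := by
          gcongr
          · exact abs_cos_le_one _
          · exact abs_edgeProfile_le hp (by linarith) (by linarith)
      _ = (m + π / 2 - t) ^ p := by
          field_simp
          ring_nf

/-- `Φ` solves the Sturm-Liouville equation `Φ'' = -c V Φ` on `U`, written as a first-order system
for `Φ` and its derivative `Φ'`. -/
structure IsSturmLiouvilleSolution (U : Set ℝ) (V : ℝ → ℝ) (c : ℝ) (Φ Φ' : ℝ → ℝ) : Prop where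
  hasDerivAt : ∀ x ∈ U, HasDerivAt Φ (Φ' x) x
  hasDerivAt_deriv : ∀ x ∈ U, HasDerivAt Φ' (-c * (V x * Φ x)) x

lemma exists_angular_sturmLiouvilleSolution (hp : 0 < p) (hm : 0 ≤ m) (hk : k ^ 2 = p * (1 - p))
    (hmatch : p * coshIntegral (p + 1) 0 * cos (k * m) = k * sin (k * m) * coshIntegral p 0) :
    ∃ Φ Φ', IsSturmLiouvilleSolution (Ioo (-(m + π / 2)) (m + π / 2)) (angularWeight m)
      (k ^ 2) Φ Φ' ∧ Φ 0 = 1 ∧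
      ∀ x ∈ Ioo (-(m + π / 2)) (m + π / 2), |Φ x| ≤ (m + π / 2 - |x|) ^ p := by
  set h := halfProfile k m p
  set h' := halfProfileDeriv k m p
  have hh' : h' 0 = 0 := by simp [h', halfProfileDeriv, hm]
  have hneg {f : ℝ → ℝ} {d x : ℝ} (hf : HasDerivAt f d (-x)) :
      HasDerivAt (fun y ↦ f (-y)) (-d) x :=
    (hf.comp x (hasDerivAt_neg x)).congr_deriv (mul_neg_one d)
  have hweight (x : ℝ) : angularWeight m (-x) = angularWeight m x := by simp [angularWeight]
  refine ⟨fun x ↦ if x ≤ 0 then h (-x) else h x, fun x ↦ if x ≤ 0 then -h' (-x) else h' x,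
    ⟨fun x hx ↦ ?_, fun x hx ↦ ?_⟩, by simp [h, halfProfile, hm], fun x hx ↦ ?_⟩
  · exact hasDerivAt_ite_le (f := fun x ↦ h (-x)) (f' := fun x ↦ -h' (-x)) (g' := h')
      (fun _ ↦ hneg (hasDerivAt_halfProfile hp (by linarith [hx.1]) hmatch))
      (fun _ ↦ hasDerivAt_halfProfile hp hx.2 hmatch) (by simp) (by simp only [neg_zero, hh'])
  · refine (hasDerivAt_ite_le (f := fun x ↦ -h' (-x))
      (f' := fun x ↦ -k ^ 2 * (angularWeight m x * h (-x))) (g := h')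
      (g' := fun x ↦ -k ^ 2 * (angularWeight m x * h x)) (fun hx0 ↦ ?_)
      (fun hx0 ↦ hasDerivAt_halfProfileDeriv hp hx0 hx.2 hk hmatch)
      (by simp only [neg_zero, hh'])
      (by simp)).congr_deriv (by split_ifs <;> rfl)
    refine (hneg (hasDerivAt_halfProfileDeriv hp (by linarith) (by linarith [hx.1]) hk
      hmatch)).neg.congr_deriv ?_
    rw [neg_neg, hweight]
  · have hx' : |x| < m + π / 2 := abs_lt.2 hx
    convert abs_halfProfile_le (k := k) hp hx' using 2
    change (if x ≤ 0 then h (-x) else h x) = h |x|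
    split_ifs with hx0
    · rw [abs_of_nonpos hx0]
    · rw [abs_of_pos (not_le.1 hx0)]

end AngularProfile

section GroundStateCutoff

variable {U : Set ℝ} {V Φ Φ' χ : ℝ → ℝ} {b c c₀ p δ : ℝ}

lemma contDiffOn_one_of_hasDerivAt {f f' : ℝ → ℝ} (hU : IsOpen U)
    (hf : ∀ x ∈ U, HasDerivAt f (f' x) x) (hf' : ContinuousOn f' U) : ContDiffOn ℝ 1 f U :=
  (contDiffOn_succ_iff_deriv_of_isOpen (n := 0) hU).2
    ⟨fun x hx ↦ (hf x hx).differentiableAt.differentiableWithinAt, by simp,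
      contDiffOn_zero.2 (hf'.congr fun x hx ↦ (hf x hx).deriv)⟩

namespace IsSturmLiouvilleSolution

lemma continuousOn (h : IsSturmLiouvilleSolution U V c Φ Φ') : ContinuousOn Φ U :=
  fun x hx ↦ (h.hasDerivAt x hx).continuousAt.continuousWithinAt

lemma contDiffOn (h : IsSturmLiouvilleSolution U V c Φ Φ') (hU : IsOpen U) :
    ContDiffOn ℝ 1 Φ U :=
  contDiffOn_one_of_hasDerivAt hU h.hasDerivAt fun x hx ↦
    (h.hasDerivAt_deriv x hx).continuousAt.continuousWithinAt

lemma contDiffOn_deriv (h : IsSturmLiouvilleSolution U V c Φ Φ') (hU : IsOpen U)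
    (hV : ContinuousOn V U) : ContDiffOn ℝ 1 Φ' U :=
  contDiffOn_one_of_hasDerivAt hU h.hasDerivAt_deriv
    (continuousOn_const.mul (hV.mul h.continuousOn))

-- The difference of the two integrands is the derivative of `χ² Φ Φ'`.
lemma integral_deriv_mul_sq (h : IsSturmLiouvilleSolution U V c Φ Φ') (hU : IsOpen U)
    (hV : ContinuousOn V U) (hχ : IsTestFunction 1 U χ) :
    ∫ x, deriv (χ * Φ) x ^ 2 = (∫ x, (Φ x * deriv χ x) ^ 2) + c * ∫ x, V x * (χ * Φ) x ^ 2 := by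
  have hχΦ : IsTestFunction 1 U (χ * Φ) := hχ.mul_contDiffOn hU (h.contDiffOn hU)
  have hχχ : IsTestFunction 1 U (χ * (χ * (Φ * Φ'))) := hχ.mul_contDiffOn hU
    (hχ.contDiff.contDiffOn.mul ((h.contDiffOn hU).mul (h.contDiffOn_deriv hU hV)))
  have hint₁ : Integrable fun x ↦ (Φ x * deriv χ x) ^ 2 := by
    simpa only [mul_pow, Pi.pow_apply] using hχ.deriv.integrable_mul_sq hU (h.continuousOn.pow 2)
  have hint₂ : Integrable fun x ↦ V x * (χ * Φ) x ^ 2 := hχΦ.integrable_mul_sq hU hV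
  have hpt (x : ℝ) : deriv (χ * Φ) x ^ 2 = (Φ x * deriv χ x) ^ 2 + c * (V x * (χ * Φ) x ^ 2) +
      deriv (χ * (χ * (Φ * Φ'))) x := by
    by_cases hx : x ∈ U
    · have hχx := hχ.hasDerivAt x
      have hΦx := h.hasDerivAt x hx
      rw [(hχx.mul hΦx).deriv, (hχx.mul (hχx.mul (hΦx.mul (h.hasDerivAt_deriv x hx)))).deriv]
      simp only [Pi.mul_apply]
      ring
    · simp [hχΦ.deriv.eq_zero_of_notMem hx, hχχ.deriv.eq_zero_of_notMem hx,
        hχ.deriv.eq_zero_of_notMem hx, hχ.eq_zero_of_notMem hx]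
  simp_rw [hpt]
  rw [integral_add (by exact hint₁.add (hint₂.const_mul c)) hχχ.deriv.integrable,
    hχχ.integral_deriv, add_zero, integral_add hint₁ (hint₂.const_mul c), integral_const_mul]

end IsSturmLiouvilleSolution

lemma deriv_smoothTransition_eq_zero {x : ℝ} (hx : x ∉ Icc 0 1) :
    deriv smoothTransition x = 0 := by
  rcases not_and_or.1 hx with h | h
  · refine IsLocalMin.deriv_eq_zero (.of_forall fun y ↦ ?_)
    rw [smoothTransition.zero_of_nonpos (le_of_not_ge h)]
    exact smoothTransition.nonneg y
  · refine IsLocalMax.deriv_eq_zero (.of_forall fun y ↦ ?_)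
    rw [smoothTransition.one_of_one_le (le_of_not_ge h)]
    exact smoothTransition.le_one y

lemma exists_abs_deriv_smoothTransition_le : ∃ C, ∀ x, |deriv smoothTransition x| ≤ C :=
  (HasCompactSupport.intro isCompact_Icc
    fun _ ↦ deriv_smoothTransition_eq_zero).exists_bound_of_continuous
    ((smoothTransition.contDiff (n := 1)).continuous_deriv le_rfl)

/-- A smooth cutoff of the interval `(-b, b)` at distance `δ` from the endpoints, with a transition
zone of width `δ`. -/
noncomputable def intervalCutoff (b δ x : ℝ) : ℝ :=
  smoothTransition ((b - x) / δ - 1) * smoothTransition ((b + x) / δ - 1)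

lemma isTestFunction_intervalCutoff (b : ℝ) (hδ : 0 < δ) :
    IsTestFunction ∞ (Icc (-(b - δ)) (b - δ)) (intervalCutoff b δ) := by
  have hzero (x : ℝ) (hx : x ∉ Icc (-(b - δ)) (b - δ)) : intervalCutoff b δ x = 0 := by
    rcases not_and_or.1 hx with h | h
    · refine mul_eq_zero_of_right _ (smoothTransition.zero_of_nonpos ?_)
      rw [sub_nonpos, div_le_one hδ]
      linarith
    · refine mul_eq_zero_of_left (smoothTransition.zero_of_nonpos ?_) _
      rw [sub_nonpos, div_le_one hδ]
      linarith
  exact ⟨(smoothTransition.contDiff.comp (by fun_prop)).mul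
    (smoothTransition.contDiff.comp (by fun_prop)), HasCompactSupport.intro isCompact_Icc hzero,
    closure_minimal (fun x hx ↦ by_contra fun h ↦ hx (hzero x h)) isClosed_Icc⟩

lemma intervalCutoff_eq_one {x : ℝ} (hδ : 0 < δ) (hx : |x| ≤ b - 2 * δ) :
    intervalCutoff b δ x = 1 := by
  have hx' := abs_le.1 hx
  rw [intervalCutoff, smoothTransition.one_of_one_le, smoothTransition.one_of_one_le, one_mul] <;>
  · rw [le_sub_iff_add_le, le_div_iff₀ hδ]
    linarith

lemma exists_abs_deriv_intervalCutoff_le :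
    ∃ C, ∀ b δ x, 0 < δ → |deriv (intervalCutoff b δ) x| ≤ C / δ := by
  obtain ⟨C, hC⟩ := exists_abs_deriv_smoothTransition_le
  refine ⟨2 * C, fun b δ x hδ ↦ ?_⟩
  have hC0 : 0 ≤ C := (abs_nonneg _).trans (hC 0)
  have hd (y : ℝ) : HasDerivAt smoothTransition (deriv smoothTransition y) y :=
    ((smoothTransition.contDiff (n := 1)).differentiable one_ne_zero y).hasDerivAt
  have h1 : HasDerivAt (fun x ↦ (b - x) / δ - 1) (-1 / δ) x :=
    (((hasDerivAt_id x).const_sub b).div_const δ).sub_const 1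
  have h2 : HasDerivAt (fun x ↦ (b + x) / δ - 1) (1 / δ) x :=
    (((hasDerivAt_id x).const_add b).div_const δ).sub_const 1
  have hst (y : ℝ) : |smoothTransition y| ≤ 1 := by
    rw [abs_of_nonneg (smoothTransition.nonneg y)]
    exact smoothTransition.le_one y
  have hδabs : |-1 / δ| = 1 / δ ∧ |1 / δ| = 1 / δ := by simp [abs_div, abs_of_pos hδ]
  change |deriv ((smoothTransition ∘ fun x ↦ (b - x) / δ - 1) *
    smoothTransition ∘ fun x ↦ (b + x) / δ - 1) x| ≤ _
  rw [(((hd _).comp x h1).mul ((hd _).comp x h2)).deriv]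
  refine (abs_add_le _ _).trans ?_
  simp only [Function.comp_apply, abs_mul, hδabs]
  calc _ ≤ C * (1 / δ) * 1 + 1 * (C * (1 / δ)) := by gcongr <;> first | exact hC _ | exact hst _
    _ = 2 * C / δ := by ring

lemma deriv_intervalCutoff_eq_zero {x : ℝ} (hδ : 0 < δ)
    (hx : x ∉ Icc (-(b - δ)) (-(b - 2 * δ)) ∪ Icc (b - 2 * δ) (b - δ)) :
    deriv (intervalCutoff b δ) x = 0 := by
  by_cases h : |x| < b - 2 * δ
  · have : intervalCutoff b δ =ᶠ[𝓝 x] fun _ ↦ 1 := by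
      filter_upwards [(isOpen_lt continuous_abs continuous_const).mem_nhds h] with y hy
      exact intervalCutoff_eq_one hδ (le_of_lt hy)
    rw [this.deriv_eq, deriv_const]
  · refine ((isTestFunction_intervalCutoff b hδ).of_le (m := 1)
      (by simp)).deriv.eq_zero_of_notMem fun hx' ↦ hx ?_
    rcases le_abs.1 (not_lt.1 h) with h | h
    · exact .inr ⟨h, hx'.2⟩
    · exact .inl ⟨hx'.1, by linarith⟩

lemma tendsto_integral_mul_deriv_intervalCutoff_sq (hp : 1 / 2 < p)
    (hΦ : ∀ x ∈ Ioo (-b) b, |Φ x| ≤ (b - |x|) ^ p) :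
    Filter.Tendsto (fun δ ↦ ∫ x, (Φ x * deriv (intervalCutoff b δ) x) ^ 2) (𝓝[>] 0) (𝓝 0) := by
  obtain ⟨C, hC⟩ := exists_abs_deriv_intervalCutoff_le
  have hlim : Filter.Tendsto (fun δ ↦ 2 * (2 ^ p * C) ^ 2 * δ ^ (2 * p - 1)) (𝓝[>] 0) (𝓝 0) := by
    have h := ((continuousAt_rpow_const 0 (2 * p - 1) (.inr (by linarith))).const_mul
      (2 * (2 ^ p * C) ^ 2)).tendsto.mono_left (nhdsWithin_le_nhds (s := Ioi 0))
    rwa [zero_rpow (by linarith), mul_zero] at h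
  refine squeeze_zero' (.of_forall fun δ ↦ integral_nonneg fun x ↦ sq_nonneg _) ?_ hlim
  filter_upwards [self_mem_nhdsWithin] with δ hδ
  rw [mem_Ioi] at hδ
  let S := Icc (-(b - δ)) (-(b - 2 * δ)) ∪ Icc (b - 2 * δ) (b - δ)
  have hS : volume.real S ≤ 2 * δ := by
    refine (measureReal_union_le _ _).trans_eq ?_
    rw [Real.volume_real_Icc_of_le (by linarith), Real.volume_real_Icc_of_le (by linarith)]
    ring
  have hle (x : ℝ) (hx : x ∈ S) :
      ‖(Φ x * deriv (intervalCutoff b δ) x) ^ 2‖ ≤ ((2 * δ) ^ p * (C / δ)) ^ 2 := by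
    rw [norm_of_nonneg (sq_nonneg _), ← sq_abs, abs_mul]
    by_cases hxb : x ∈ Ioo (-b) b
    · have hxδ : b - |x| ≤ 2 * δ := by
        rcases hx with hx | hx
        · linarith [hx.2, neg_le_abs x]
        · linarith [hx.1, le_abs_self x]
      have hx0 : 0 ≤ b - |x| := sub_nonneg.2 (abs_lt.2 hxb).le
      have hpow : (b - |x|) ^ p ≤ (2 * δ) ^ p := rpow_le_rpow hx0 hxδ (by linarith)
      gcongr
      exacts [(hΦ x hxb).trans hpow, hC b δ x hδ]
    · have hχ := (isTestFunction_intervalCutoff b hδ).of_le (m := 1) (by simp)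
      rw [hχ.deriv.eq_zero_of_notMem fun hx' ↦ hxb ⟨by linarith [hx'.1], by linarith [hx'.2]⟩,
        abs_zero, mul_zero, zero_pow two_ne_zero]
      positivity
  calc ∫ x, (Φ x * deriv (intervalCutoff b δ) x) ^ 2
      = ∫ x in S, (Φ x * deriv (intervalCutoff b δ) x) ^ 2 :=
        (setIntegral_eq_integral_of_forall_compl_eq_zero fun x hx ↦ by
          rw [deriv_intervalCutoff_eq_zero hδ hx, mul_zero, zero_pow two_ne_zero]).symm
    _ ≤ ((2 * δ) ^ p * (C / δ)) ^ 2 * volume.real S := (le_abs_self _).trans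
        (norm_setIntegral_le_of_norm_le_const
          (measure_union_lt_top measure_Icc_lt_top measure_Icc_lt_top) hle)
    _ ≤ ((2 * δ) ^ p * (C / δ)) ^ 2 * (2 * δ) := by gcongr
    _ = 2 * (2 ^ p * C) ^ 2 * δ ^ (2 * p - 1) := by
        rw [Real.mul_rpow two_pos.le hδ.le, rpow_sub_one hδ.ne', two_mul p, rpow_add hδ]
        field_simp

-- `χ Φ` nearly attains equality when `χ` is a cutoff that is close to `1`.
lemma IsSturmLiouvilleSolution.hardyFails
    (h : IsSturmLiouvilleSolution (Ioo (-b) b) V c₀ Φ Φ') (hb : 0 < b)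
    (hV : ContinuousOn V (Ioo (-b) b)) (hVpos : ∀ x ∈ Ioo (-b) b, 0 < V x) (hΦ0 : Φ 0 ≠ 0)
    (hp : 1 / 2 < p) (hΦ : ∀ x ∈ Ioo (-b) b, |Φ x| ≤ (b - |x|) ^ p) (hc : c₀ < c) :
    HardyFails 1 (Ioo (-b) b) V c := by
  have hsub : Icc (-(b / 2)) (b / 2) ⊆ Ioo (-b) b :=
    fun x hx ↦ ⟨by linarith [hx.1], by linarith [hx.2]⟩
  have hJ : 0 < ∫ x in -(b / 2)..b / 2, V x * Φ x ^ 2 := by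
    refine intervalIntegral.integral_pos (by linarith)
      ((hV.mono hsub).mul ((h.continuousOn.mono hsub).pow 2))
      (fun x hx ↦ mul_nonneg (hVpos x (hsub (Ioc_subset_Icc_self hx))).le (sq_nonneg _))
      ⟨0, ⟨by linarith, by linarith⟩, ?_⟩
    have := hVpos 0 ⟨by linarith, hb⟩
    positivity
  obtain ⟨δ, hlt, hδ⟩ := ((tendsto_integral_mul_deriv_intervalCutoff_sq hp hΦ).eventually
    (gt_mem_nhds (mul_pos (sub_pos.2 hc) hJ))).and
    (Ioo_mem_nhdsGT (show 0 < b / 4 by positivity)) |>.exists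
  have hχ : IsTestFunction 1 (Ioo (-b) b) (intervalCutoff b δ) :=
    ((isTestFunction_intervalCutoff b hδ.1).of_le (by simp)).mono
      fun x hx ↦ ⟨by linarith [hx.1, hδ.1], by linarith [hx.2, hδ.1]⟩
  have hχΦ := hχ.mul_contDiffOn isOpen_Ioo (h.contDiffOn isOpen_Ioo)
  have hle : ∫ x in -(b / 2)..b / 2, V x * Φ x ^ 2 ≤ ∫ x, V x * (intervalCutoff b δ * Φ) x ^ 2 := by
    rw [intervalIntegral.integral_of_le (by linarith), ← integral_Icc_eq_integral_Ioc]
    calc ∫ x in Icc (-(b / 2)) (b / 2), V x * Φ x ^ 2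
        = ∫ x in Icc (-(b / 2)) (b / 2), V x * (intervalCutoff b δ * Φ) x ^ 2 :=
          setIntegral_congr_fun measurableSet_Icc fun x hx ↦ by
            rw [Pi.mul_apply, intervalCutoff_eq_one hδ.1 (by linarith [abs_le.2 hx, hδ.2]), one_mul]
      _ ≤ ∫ x, V x * (intervalCutoff b δ * Φ) x ^ 2 :=
          setIntegral_le_integral (hχΦ.integrable_mul_sq isOpen_Ioo hV) (.of_forall fun x ↦ ?_)
    by_cases hx : x ∈ Ioo (-b) b
    · exact mul_nonneg (hVpos x hx).le (sq_nonneg _)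
    · simp [hχΦ.eq_zero_of_notMem hx]
  refine hardyFails_iff_deriv.2 ⟨_, hχΦ, ?_⟩
  rw [h.integral_deriv_mul_sq isOpen_Ioo hV hχ]
  linarith [mul_le_mul_of_nonneg_left hle (sub_pos.2 hc).le]

end GroundStateCutoff

section Mollification

open Filter
open scoped Convolution

lemma IsTestFunction.normed_convolution {E : Type*} [NormedAddCommGroup E] [NormedSpace ℝ E]
    [FiniteDimensional ℝ E] [MeasurableSpace E] [BorelSpace E] {μ : Measure E} [μ.IsAddHaarMeasure]
    {U : Set E} {f : E → ℝ} (hf : IsTestFunction 0 U f) (φ : ContDiffBump (0 : E)) :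
    IsTestFunction ∞ (Metric.cthickening φ.rOut (tsupport f))
      (φ.normed μ ⋆[.lsmul ℝ ℝ, μ] f) where
  contDiff := φ.hasCompactSupport_normed.contDiff_convolution_left _ φ.contDiff_normed
    hf.continuous.locallyIntegrable
  hasCompactSupport := φ.hasCompactSupport_normed.convolution _ hf.hasCompactSupport
  tsupport_subset := closure_minimal
    (by
      refine (support_convolution_subset _).trans (subset_trans ?_
        (Metric.thickening_subset_cthickening _ _))
      rw [φ.support_normed_eq, ball_add_zero]
      exact Metric.thickening_subset_of_subset _ (subset_tsupport f))
    Metric.isClosed_cthickening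

variable {U : Set ℝ} {V f : ℝ → ℝ} {c : ℝ}

lemma IsTestFunction.tendsto_integral_mul_normed_convolution_sq {φ : ℕ → ContDiffBump (0 : ℝ)}
    (hφ : Tendsto (fun n ↦ (φ n).rOut) atTop (𝓝 0)) (hf : IsTestFunction 0 U f) (hU : IsOpen U)
    (hV : ContinuousOn V U) :
    Tendsto (fun n ↦ ∫ x, V x * ((φ n).normed volume ⋆[.lsmul ℝ ℝ, volume] f) x ^ 2) atTop
      (𝓝 (∫ x, V x * f x ^ 2)) := by
  obtain ⟨M, hM⟩ := hf.hasCompactSupport.exists_bound_of_continuous hf.continuous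
  obtain ⟨r, hr, hrU⟩ := hf.hasCompactSupport.isCompact.exists_cthickening_subset_open hU
    hf.tsupport_subset
  have hK : IsCompact (Metric.cthickening r (tsupport f)) :=
    hf.hasCompactSupport.isCompact.cthickening
  set K := Metric.cthickening r (tsupport f)
  have hle (n : ℕ) (x : ℝ) : |((φ n).normed volume ⋆[.lsmul ℝ ℝ, volume] f) x| ≤ 3 * M := by
    have := (φ n).dist_normed_convolution_le (μ := volume) (x₀ := x)
      hf.continuous.aestronglyMeasurable fun y _ ↦ (dist_le_norm_add_norm (f y) (f x)).trans
        (add_le_add (hM y) (hM x))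
    have := abs_sub_abs_le_abs_sub (((φ n).normed volume ⋆[.lsmul ℝ ℝ, volume] f) x) (f x)
    rw [dist_eq_norm, norm_eq_abs] at *
    linarith [hM x, norm_eq_abs (f x)]
  have hsupp : ∀ᶠ n in atTop,
      IsTestFunction ∞ K ((φ n).normed volume ⋆[.lsmul ℝ ℝ, volume] f) := by
    filter_upwards [hφ.eventually (gt_mem_nhds hr)] with n hn
    exact (hf.normed_convolution (φ n)).mono (Metric.cthickening_mono hn.le _)
  refine tendsto_integral_filter_of_dominated_convergence
    (K.indicator fun x ↦ |V x| * (3 * M) ^ 2) ?_ ?_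
    (((hV.mono hrU).abs.mul continuousOn_const).integrableOn_compact hK |>.integrable_indicator
      hK.measurableSet) (.of_forall fun x ↦ ?_)
  · filter_upwards [hsupp] with n hn
    exact ((hn.mono hrU).integrable_mul_sq hU hV).aestronglyMeasurable
  · filter_upwards [hsupp] with n hn
    refine .of_forall fun x ↦ ?_
    by_cases hx : x ∈ K
    · rw [indicator_of_mem hx, norm_mul, norm_pow]
      gcongr
      exacts [le_rfl, hle n x]
    · simp [hn.eq_zero_of_notMem hx, indicator_of_notMem hx]
  · exact ((ContDiffBump.convolution_tendsto_right_of_continuous hφ hf.continuous x).pow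
      2).const_mul _

lemma IsTestFunction.deriv_normed_convolution (hf : IsTestFunction 1 U f)
    (φ : ContDiffBump (0 : ℝ)) :
    deriv (φ.normed volume ⋆[.lsmul ℝ ℝ, volume] f) =
      φ.normed volume ⋆[.lsmul ℝ ℝ, volume] deriv f :=
  funext fun x ↦ (hf.hasCompactSupport.hasDerivAt_convolution_right _
    φ.continuous_normed.locallyIntegrable hf.contDiff x).deriv

lemma HardyFails.smooth (h : HardyFails 1 U V c) (hU : IsOpen U) (hV : ContinuousOn V U) :
    HardyFails ∞ U V c := by
  obtain ⟨f, hf, hlt⟩ := hardyFails_iff_deriv.1 h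
  let φ (n : ℕ) : ContDiffBump (0 : ℝ) :=
    ⟨1 / (n + 1) / 2, 1 / (n + 1), by positivity, half_lt_self (by positivity)⟩
  have hφ : Tendsto (fun n ↦ (φ n).rOut) atTop (𝓝 0) := tendsto_one_div_add_atTop_nhds_zero_nat
  have hf0 := hf.of_le zero_le_one
  have hlhs : Tendsto (fun n ↦ ∫ x, deriv ((φ n).normed volume ⋆[.lsmul ℝ ℝ, volume] f) x ^ 2)
      atTop (𝓝 (∫ x, deriv f x ^ 2)) := by
    simpa [hf.deriv_normed_convolution] using (hf.deriv.mono
      (subset_univ U)).tendsto_integral_mul_normed_convolution_sq hφ isOpen_univ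
      (continuousOn_const (c := (1 : ℝ)))
  obtain ⟨r, hr, hrU⟩ := hf.hasCompactSupport.isCompact.exists_cthickening_subset_open hU
    hf.tsupport_subset
  obtain ⟨n, hn, hnr⟩ := ((hlhs.eventually_lt
    ((hf0.tendsto_integral_mul_normed_convolution_sq hφ hU hV).const_mul c) hlt).and
    (hφ.eventually (gt_mem_nhds hr))).exists
  exact hardyFails_iff_deriv.2 ⟨_, (hf0.normed_convolution (φ n)).mono
    ((Metric.cthickening_mono hnr.le _).trans hrU), hn⟩

end Mollification

section AngularInequality

variable {m c c₀ β : ℝ}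

lemma inv_sq_le_angularWeight (hm : 0 ≤ m) {x : ℝ} (hx : x ∈ Ioo m (m + π / 2)) :
    ((m + π / 2 - x) ^ 2)⁻¹ ≤ angularWeight m x := by
  obtain ⟨hmx, hxm⟩ := hx
  rw [angularWeight_of_ge (hm.trans hmx.le) hmx.le]
  have hpos : 0 < cos (x - m) := cos_sub_pos_of_mem hmx.le hxm
  gcongr
  calc cos (x - m) = sin (m + π / 2 - x) := by rw [← sin_pi_div_two_sub]; ring_nf
    _ ≤ m + π / 2 - x := sin_le (by linarith)

lemma hardyFails_angularWeight_of_one_quarter_lt (hm : 0 ≤ m) (hc : 1 / 4 < c) :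
    HardyFails ∞ (Ioo (-(m + π / 2)) (m + π / 2)) (angularWeight m) c := by
  have hpi := pi_pos
  have hsub : Ioo m (m + π / 2) ⊆ Ioo (-(m + π / 2)) (m + π / 2) :=
    Ioo_subset_Ioo_left (by linarith)
  have hreflect : HardyFails ∞ (Ioo m (m + π / 2)) (fun x ↦ ((m + π / 2 - x) ^ 2)⁻¹) c := by
    convert (hardyFails_inv_sq_Ioo hc (half_pos hpi)).comp_mul_add (a := -1) (by norm_num)
      (m + π / 2) using 1
    · ext x
      simp only [mem_Ioo, mem_preimage]
      constructor <;> rintro ⟨h₁, h₂⟩ <;> constructor <;> linarith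
    · ext x
      ring_nf
    · ring
  refine HardyFails.mono ?_ hsub
  refine hreflect.mono_weight (by linarith) isOpen_Ioo ?_ ((continuousOn_angularWeight m).mono hsub)
    fun x hx ↦ inv_sq_le_angularWeight hm hx
  exact ContinuousOn.inv₀ (by fun_prop) fun x hx ↦ (pow_pos (sub_pos.2 hx.2) 2).ne'

lemma hardyEq.cos_ne_zero (h : hardyEq c₀ β) : cos (√c₀ * ((β - π) / 2)) ≠ 0 := by
  intro hcos
  have hpos : 0 < 2 * (Gamma ((3 + √(1 - 4 * c₀)) / 4) / Gamma ((1 + √(1 - 4 * c₀)) / 4)) ^ 2 := by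
    positivity
  rw [← h, tan_eq_sin_div_cos, hcos, div_zero, mul_zero] at hpos
  exact hpos.false

-- The logarithmic derivatives of `cos (√c₀ θ)` and the edge profile agree where the two meet.
lemma hardyEq.coshIntegral_matching (h : hardyEq c₀ β) {p : ℝ} (hp : p = (1 + √(1 - 4 * c₀)) / 2) :
    p * coshIntegral (p + 1) 0 * cos (√c₀ * ((β - π) / 2))
      = √c₀ * sin (√c₀ * ((β - π) / 2)) * coshIntegral p 0 := by
  have hp0 : 0 < p := by rw [hp]; positivity
  have hnum : (p + 1) / 2 = (3 + √(1 - 4 * c₀)) / 4 := by rw [hp]; ring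
  have hden : p / 2 = (1 + √(1 - 4 * c₀)) / 4 := by rw [hp]; ring
  rw [mul_coshIntegral_add_one_zero hp0, hnum, hden, ← h, mul_right_comm, mul_assoc √c₀,
    tan_mul_cos h.cos_ne_zero]

lemma hardyFails_angularWeight_of_hardyEq (hβ : π ≤ β) (hc₀ : c₀ ∈ Ico 0 (1 / 4))
    (h : hardyEq c₀ β) (hc : c₀ < c) :
    HardyFails ∞ (Ioo (-(β / 2)) (β / 2)) (angularWeight ((β - π) / 2)) c := by
  obtain ⟨hc0, hc4⟩ := hc₀
  have hpi := pi_pos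
  set m := (β - π) / 2 with hm
  have hβm : β / 2 = m + π / 2 := by rw [hm]; ring
  rw [hβm]
  set p := (1 + √(1 - 4 * c₀)) / 2 with hp
  have hroot : 0 < √(1 - 4 * c₀) := sqrt_pos.2 (by linarith)
  have hp2 : 1 / 2 < p := by rw [hp]; linarith
  have hk : √c₀ ^ 2 = p * (1 - p) := by
    rw [sq_sqrt hc0, hp]
    linear_combination (1 / 4) * sq_sqrt (show 0 ≤ 1 - 4 * c₀ by linarith)
  obtain ⟨Φ, Φ', hΦ, hΦ0, hbound⟩ := exists_angular_sturmLiouvilleSolution (m := m) (by linarith)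
    (by linarith) hk (h.coshIntegral_matching hp)
  rw [sq_sqrt hc0] at hΦ
  have hcont := continuousOn_angularWeight m
  refine (hΦ.hardyFails (by linarith) hcont (fun x hx ↦ ?_) (by simp [hΦ0]) hp2 hbound hc).smooth
    isOpen_Ioo hcont
  exact inv_pos.2 (pow_pos (cos_max_pos (abs_lt.2 hx)) 2)

lemma hardyFails_angularWeight (hβ : π ≤ β) (h : c₀ = 1 / 4 ∨ c₀ ∈ Ioc 0 (1 / 4) ∧ hardyEq c₀ β)
    (hc : c₀ < c) : HardyFails ∞ (Ioo (-(β / 2)) (β / 2)) (angularWeight ((β - π) / 2)) c := by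
  rcases lt_or_ge (1 / 4) c with hc4 | hc4
  · rw [show β / 2 = (β - π) / 2 + π / 2 by ring]
    exact hardyFails_angularWeight_of_one_quarter_lt (by linarith) hc4
  · obtain rfl | ⟨⟨hc0, -⟩, heq⟩ := h
    · linarith
    · exact hardyFails_angularWeight_of_hardyEq hβ ⟨hc0.le, hc.trans_le hc4⟩ heq hc

end AngularInequality

section LogPolarChart

variable {F : Type*} [NormedAddCommGroup F] [InnerProductSpace ℝ F]
  {n : WithTop ℕ∞} {S : Set ℂ} {φ : ℂ → ℝ} {v : F} {L : ℂ ≃ₗᵢ[ℝ] F}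

/-- The log-polar chart `w ↦ v + L (exp w)` of a plane, centred at `v`: the real part of `w` is the
logarithm of the distance to `v` and the imaginary part is the polar angle. -/
noncomputable def logPolarChart (v : F) (L : ℂ ≃ₗᵢ[ℝ] F) : OpenPartialHomeomorph ℂ F :=
  Complex.expOpenPartialHomeomorph.transHomeomorph (L.toHomeomorph.trans (Homeomorph.addLeft v))

lemma logPolarChart_apply (v : F) (L : ℂ ≃ₗᵢ[ℝ] F) (w : ℂ) :
    logPolarChart v L w = v + L (Complex.exp w) := rfl

lemma mem_logPolarChart_source {w : ℂ} : w ∈ (logPolarChart v L).source ↔ |w.im| < π :=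
  abs_lt.symm

lemma hasFDerivAt_logPolarChart (v : F) (L : ℂ ≃ₗᵢ[ℝ] F) (w : ℂ) :
    HasFDerivAt (logPolarChart v L)
      ((L : ℂ →L[ℝ] F) ∘L (Complex.exp w • (1 : ℂ →L[ℝ] ℂ))) w :=
  ((L : ℂ →L[ℝ] F).hasFDerivAt.comp w
    (Complex.hasStrictFDerivAt_exp_real w).hasFDerivAt).const_add v

lemma contDiffOn_logPolarChart_symm :
    ContDiffOn ℝ n (logPolarChart v L).symm (logPolarChart v L).target := fun x hx ↦ by
  have hlog : ContDiffAt ℝ n Complex.log (L.symm (-v + x)) :=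
    (Complex.contDiffAt_log hx).restrict_scalars ℝ
  exact (hlog.comp x (L.symm.contDiff.contDiffAt.comp x
    (contDiffAt_const.add contDiffAt_id))).contDiffWithinAt

lemma norm_comp_smul_one {G : Type*} [NormedAddCommGroup G] [NormedSpace ℝ G] (A : ℂ →L[ℝ] G)
    (a : ℂ) : ‖A ∘L (a • (1 : ℂ →L[ℝ] ℂ))‖ = ‖a‖ * ‖A‖ := by
  have hle (B : ℂ →L[ℝ] G) (b : ℂ) : ‖B ∘L (b • (1 : ℂ →L[ℝ] ℂ))‖ ≤ ‖b‖ * ‖B‖ := by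
    refine (B.opNorm_comp_le _).trans_eq ?_
    rw [norm_smul, norm_one, mul_one, mul_comm]
  refine (hle A a).antisymm ?_
  rcases eq_or_ne a 0 with rfl | ha
  · simp
  have hA : A = (A ∘L (a • (1 : ℂ →L[ℝ] ℂ))) ∘L (a⁻¹ • (1 : ℂ →L[ℝ] ℂ)) := by
    ext z
    simp [ha]
  calc ‖a‖ * ‖A‖ ≤ ‖a‖ * (‖a⁻¹‖ * ‖A ∘L (a • (1 : ℂ →L[ℝ] ℂ))‖) := by
        gcongr
        conv_lhs => rw [hA]
        exact hle _ _
    _ = ‖A ∘L (a • (1 : ℂ →L[ℝ] ℂ))‖ := by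
        rw [norm_inv, mul_inv_cancel_left₀ (norm_ne_zero_iff.2 ha)]

lemma norm_fderiv_comp_logPolarChart {u : F → ℝ} (hu : Differentiable ℝ u) (w : ℂ) :
    ‖fderiv ℝ (u ∘ logPolarChart v L) w‖ =
      ‖Complex.exp w‖ * ‖fderiv ℝ u (logPolarChart v L w)‖ := by
  rw [((hu _).hasFDerivAt.comp w (hasFDerivAt_logPolarChart v L w)).fderiv,
    ← ContinuousLinearMap.comp_assoc, norm_comp_smul_one]
  congr 1
  exact ContinuousLinearMap.opNorm_comp_linearIsometryEquiv _ L

lemma det_smul_one (a : ℂ) : (a • (1 : ℂ →L[ℝ] ℂ)).det = ‖a‖ ^ 2 := by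
  rw [Complex.sq_norm, ← Algebra.norm_complex_apply]
  rfl

lemma setIntegral_slitPlane (g : ℂ → ℝ) :
    ∫ z in Complex.slitPlane, g z =
      ∫ w in Complex.expOpenPartialHomeomorph.source, ‖Complex.exp w‖ ^ 2 * g (Complex.exp w) := by
  have himage : Complex.slitPlane =
      Complex.exp '' Complex.expOpenPartialHomeomorph.source :=
    Complex.expOpenPartialHomeomorph.image_source_eq_target.symm
  rw [himage, integral_image_eq_integral_abs_det_fderiv_smul volume
    Complex.expOpenPartialHomeomorph.open_source.measurableSet
    (fun w _ ↦ (Complex.hasStrictFDerivAt_exp_real w).hasFDerivAt.hasFDerivWithinAt)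
    Complex.expOpenPartialHomeomorph.injOn]
  simp_rw [det_smul_one, abs_of_nonneg (sq_nonneg ‖_‖), smul_eq_mul]

/-- The transplant to the plane of a function of the log-polar coordinates, extended by zero off the
chart. -/
noncomputable def logPolarLift (v : F) (L : ℂ ≃ₗᵢ[ℝ] F) (φ : ℂ → ℝ) : F → ℝ :=
  (logPolarChart v L).target.indicator (φ ∘ (logPolarChart v L).symm)

lemma isTestFunction_logPolarLift (hφ : IsTestFunction n S φ)
    (hS : S ⊆ (logPolarChart v L).source) :
    IsTestFunction n (logPolarChart v L '' S) (logPolarLift v L φ) :=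
  hφ.indicator_comp_symm hS contDiffOn_logPolarChart_symm

lemma logPolarLift_logPolarChart {w : ℂ} (hw : w ∈ (logPolarChart v L).source) :
    logPolarLift v L φ (logPolarChart v L w) = φ w := by
  rw [logPolarLift, indicator_of_mem ((logPolarChart v L).map_source hw), Function.comp_apply,
    (logPolarChart v L).left_inv hw]

variable [FiniteDimensional ℝ F] [MeasurableSpace F] [BorelSpace F]

lemma integral_comp_const_add_linearIsometryEquiv {E G : Type*} [NormedAddCommGroup E]
    [InnerProductSpace ℝ E] [FiniteDimensional ℝ E] [MeasurableSpace E] [BorelSpace E]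
    [NormedAddCommGroup G] [NormedSpace ℝ G] (v : F) (L : E ≃ₗᵢ[ℝ] F) (g : F → G) :
    ∫ z, g (v + L z) = ∫ x, g x :=
  (L.measurePreserving.integral_comp L.toHomeomorph.measurableEmbedding fun x ↦ g (v + x)).trans
    (integral_add_left_eq_self g v)

lemma setIntegral_logPolarChart_target (g : F → ℝ) :
    ∫ x in (logPolarChart v L).target, g x =
      ∫ w in (logPolarChart v L).source, ‖Complex.exp w‖ ^ 2 * g (logPolarChart v L w) := by
  have hmem (z : ℂ) : v + L z ∈ (logPolarChart v L).target ↔ z ∈ Complex.slitPlane := by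
    change L.symm (-v + (v + L z)) ∈ Complex.slitPlane ↔ _
    rw [neg_add_cancel_left, L.symm_apply_apply]
  have hind (z : ℂ) : (logPolarChart v L).target.indicator g (v + L z) =
      Complex.slitPlane.indicator (fun z ↦ g (v + L z)) z := by
    classical simp only [indicator_apply, hmem]
  rw [← integral_indicator (logPolarChart v L).open_target.measurableSet,
    ← integral_comp_const_add_linearIsometryEquiv v L]
  simp_rw [hind]
  rw [integral_indicator Complex.isOpen_slitPlane.measurableSet, setIntegral_slitPlane]
  rfl

-- The exponential is conformal, so the two factors `‖exp w‖²` cancel.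
lemma integral_norm_fderiv_logPolarLift_sq (hφ : IsTestFunction 1 S φ)
    (hS : S ⊆ (logPolarChart v L).source) :
    ∫ x, ‖fderiv ℝ (logPolarLift v L φ) x‖ ^ 2 = ∫ w, ‖fderiv ℝ φ w‖ ^ 2 := by
  have hu := isTestFunction_logPolarLift (v := v) (L := L) hφ hS
  have hfderiv {w : ℂ} (hw : w ∈ (logPolarChart v L).source) :
      ‖Complex.exp w‖ * ‖fderiv ℝ (logPolarLift v L φ) (logPolarChart v L w)‖ =
        ‖fderiv ℝ φ w‖ := by
    rw [← norm_fderiv_comp_logPolarChart (hu.contDiff.differentiable one_ne_zero)]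
    congr 1
    refine Filter.EventuallyEq.fderiv_eq ?_
    filter_upwards [(logPolarChart v L).open_source.mem_nhds hw] with z hz
    exact logPolarLift_logPolarChart hz
  calc ∫ x, ‖fderiv ℝ (logPolarLift v L φ) x‖ ^ 2
      = ∫ x in (logPolarChart v L).target, ‖fderiv ℝ (logPolarLift v L φ) x‖ ^ 2 := by
        refine (setIntegral_eq_integral_of_forall_compl_eq_zero fun x hx ↦ ?_).symm
        have hxS : x ∉ logPolarChart v L '' S := by
          rintro ⟨w, hw, rfl⟩
          exact hx ((logPolarChart v L).map_source (hS hw))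
        rw [hu.fderiv_eq_zero hxS, norm_zero, zero_pow two_ne_zero]
    _ = ∫ w in (logPolarChart v L).source, ‖fderiv ℝ φ w‖ ^ 2 := by
        rw [setIntegral_logPolarChart_target]
        refine setIntegral_congr_fun (logPolarChart v L).open_source.measurableSet fun w hw ↦ ?_
        rw [← hfderiv hw, mul_pow]
    _ = ∫ w, ‖fderiv ℝ φ w‖ ^ 2 :=
        setIntegral_eq_integral_of_forall_compl_eq_zero fun w hw ↦ by
          rw [hφ.fderiv_eq_zero fun h ↦ hw (hS h), norm_zero, zero_pow two_ne_zero]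

lemma integral_mul_logPolarLift_sq (hφ : ∀ w ∉ S, φ w = 0)
    (hS : S ⊆ (logPolarChart v L).source) (V : F → ℝ) :
    ∫ x, V x * logPolarLift v L φ x ^ 2 =
      ∫ w, ‖Complex.exp w‖ ^ 2 * V (logPolarChart v L w) * φ w ^ 2 := by
  calc ∫ x, V x * logPolarLift v L φ x ^ 2
      = ∫ x in (logPolarChart v L).target, V x * logPolarLift v L φ x ^ 2 :=
        (setIntegral_eq_integral_of_forall_compl_eq_zero fun x hx ↦ by
          simp [logPolarLift, hx]).symm
    _ = ∫ w in (logPolarChart v L).source,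
          ‖Complex.exp w‖ ^ 2 * V (logPolarChart v L w) * φ w ^ 2 := by
        rw [setIntegral_logPolarChart_target]
        refine setIntegral_congr_fun (logPolarChart v L).open_source.measurableSet fun w hw ↦ ?_
        simp only [logPolarLift_logPolarChart hw, mul_assoc]
    _ = ∫ w, ‖Complex.exp w‖ ^ 2 * V (logPolarChart v L w) * φ w ^ 2 :=
        setIntegral_eq_integral_of_forall_compl_eq_zero fun w hw ↦ by
          simp [hφ w fun h ↦ hw (hS h)]

lemma HardyFails.logPolarLift {V : F → ℝ} {c : ℝ}
    (h : HardyFails n S (fun w ↦ ‖Complex.exp w‖ ^ 2 * V (logPolarChart v L w)) c) (hn : 1 ≤ n)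
    (hS : S ⊆ (logPolarChart v L).source) : HardyFails n (logPolarChart v L '' S) V c := by
  obtain ⟨φ, hφ, hlt⟩ := h
  refine ⟨_, isTestFunction_logPolarLift hφ hS, ?_⟩
  rwa [integral_norm_fderiv_logPolarLift_sq (hφ.of_le hn) hS,
    integral_mul_logPolarLift_sq (fun _ ↦ hφ.eq_zero_of_notMem) hS]

end LogPolarChart

section SeparatedVariables

open Complex in
lemma IsTestFunction.mul_re_im {n : WithTop ℕ∞} {U T : Set ℝ} {χ f : ℝ → ℝ}
    (hχ : IsTestFunction n U χ) (hf : IsTestFunction n T f) :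
    IsTestFunction n (U ×ℂ T) fun w : ℂ ↦ χ w.re * f w.im := by
  have hK : IsCompact (tsupport χ ×ℂ tsupport f) :=
    IsCompact.reProdIm hχ.hasCompactSupport hf.hasCompactSupport
  have hsupp : tsupport (fun w : ℂ ↦ χ w.re * f w.im) ⊆ tsupport χ ×ℂ tsupport f :=
    closure_minimal
      (fun w hw ↦ ⟨subset_tsupport χ (left_ne_zero_of_mul hw),
        subset_tsupport f (right_ne_zero_of_mul hw)⟩) hK.isClosed
  exact ⟨(hχ.contDiff.comp reCLM.contDiff).mul (hf.contDiff.comp imCLM.contDiff),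
    hK.of_isClosed_subset isClosed_closure hsupp,
    hsupp.trans fun w hw ↦ ⟨hχ.tsupport_subset hw.1, hf.tsupport_subset hw.2⟩⟩

lemma norm_smul_reCLM_add_smul_imCLM_sq (a b : ℝ) :
    ‖a • Complex.reCLM + b • Complex.imCLM‖ ^ 2 = a ^ 2 + b ^ 2 := by
  have h : a • Complex.reCLM + b • Complex.imCLM = innerSL ℝ (⟨a, b⟩ : ℂ) := by
    ext z
    simp [Complex.inner, mul_comm]
  rw [h, innerSL_apply_norm, Complex.sq_norm, Complex.normSq_mk]
  ring

lemma norm_fderiv_mul_re_im_sq {χ f : ℝ → ℝ} (hχ : Differentiable ℝ χ) (hf : Differentiable ℝ f)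
    (w : ℂ) : ‖fderiv ℝ (fun w : ℂ ↦ χ w.re * f w.im) w‖ ^ 2 =
      deriv χ w.re ^ 2 * f w.im ^ 2 + χ w.re ^ 2 * deriv f w.im ^ 2 := by
  have hderiv : HasFDerivAt (fun w : ℂ ↦ χ w.re * f w.im)
      ((deriv χ w.re * f w.im) • Complex.reCLM + (χ w.re * deriv f w.im) • Complex.imCLM) w := by
    refine (((hχ w.re).hasDerivAt.comp_hasFDerivAt w Complex.reCLM.hasFDerivAt).mul
      ((hf w.im).hasDerivAt.comp_hasFDerivAt w Complex.imCLM.hasFDerivAt)).congr_fderiv ?_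
    ext z
    simp only [Function.comp_apply, add_apply, smul_apply, Complex.imCLM_apply, smul_eq_mul,
      Complex.reCLM_apply]
    ring
  rw [hderiv.fderiv, norm_smul_reCLM_add_smul_imCLM_sq, mul_pow, mul_pow]

lemma integral_mul_re_im (A B : ℝ → ℝ) :
    ∫ w : ℂ, A w.re * B w.im = (∫ x, A x) * ∫ y, B y :=
  (Complex.volume_preserving_equiv_real_prod.integral_comp
    Complex.measurableEquivRealProd.measurableEmbedding fun p : ℝ × ℝ ↦ A p.1 * B p.2).trans
    (integral_prod_mul A B)

-- The cutoff in `re w` costs an arbitrarily small multiple of `∫ χ²`.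
open Complex in
lemma HardyFails.comp_im {T : Set ℝ} {V : ℝ → ℝ} {c : ℝ} (h : HardyFails ∞ T V c) (b : ℝ) :
    HardyFails ∞ (Iio b ×ℂ T) (fun w : ℂ ↦ V w.im) c := by
  obtain ⟨f, hf, hlt⟩ := hardyFails_iff_deriv.1 h
  set A := ∫ y, deriv f y ^ 2
  set B := ∫ y, V y * f y ^ 2
  set D := ∫ y, f y ^ 2
  have hD : 0 ≤ D := integral_nonneg fun _ ↦ sq_nonneg _
  have hgap : 0 < c * B - A := sub_pos.2 hlt
  obtain ⟨χ, hχ, hχlt⟩ := hardyFails_iff_deriv.1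
    (hardyFails_one_Iio (div_pos hgap (by positivity : 0 < D + 1)) b)
  simp only [one_mul] at hχlt
  set X := ∫ x, χ x ^ 2
  have hX : 0 < X := pos_of_mul_pos_right
    ((integral_nonneg fun _ ↦ sq_nonneg _).trans_lt hχlt) (by positivity)
  have hf1 := hf.of_le (m := 1) (by simp)
  have hχ1 := hχ.of_le (m := 1) (by simp)
  have hint₁ : Integrable fun w : ℂ ↦ deriv χ w.re ^ 2 * f w.im ^ 2 := by
    simpa only [mul_pow] using (hχ1.deriv.mul_re_im (hf.of_le zero_le)).integrable_sq
  have hint₂ : Integrable fun w : ℂ ↦ χ w.re ^ 2 * deriv f w.im ^ 2 := by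
    simpa only [mul_pow] using ((hχ.of_le zero_le).mul_re_im hf1.deriv).integrable_sq
  refine ⟨_, hχ.mul_re_im hf, ?_⟩
  calc ∫ w : ℂ, ‖fderiv ℝ (fun w : ℂ ↦ χ w.re * f w.im) w‖ ^ 2
      = (∫ x, deriv χ x ^ 2) * D + X * A := by
        simp_rw [norm_fderiv_mul_re_im_sq (hχ1.contDiff.differentiable one_ne_zero)
          (hf1.contDiff.differentiable one_ne_zero)]
        rw [integral_add hint₁ hint₂, integral_mul_re_im (fun x ↦ deriv χ x ^ 2) fun y ↦ f y ^ 2,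
          integral_mul_re_im (fun x ↦ χ x ^ 2) fun y ↦ deriv f y ^ 2]
    _ ≤ (c * B - A) / (D + 1) * X * D + X * A := by gcongr
    _ < c * (X * B) := by
        have hfrac : D / (D + 1) < 1 := (div_lt_one (by positivity)).2 (lt_add_one D)
        have := mul_lt_mul_of_pos_left hfrac (mul_pos hgap hX)
        calc _ = (c * B - A) * X * (D / (D + 1)) + X * A := by ring
          _ < c * (X * B) := by linarith
    _ = c * ∫ w : ℂ, V w.im * (χ w.re * f w.im) ^ 2 := by
        rw [← integral_mul_re_im (fun x ↦ χ x ^ 2) fun y ↦ V y * f y ^ 2]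
        congr! 3 with w
        ring

end SeparatedVariables

section PolarCoordinates

variable {F : Type*} [NormedAddCommGroup F] [InnerProductSpace ℝ F]
  {Ω : Set F} {v : F} {L : ℂ ≃ₗᵢ[ℝ] F} {β ε r θ φ : ℝ}

/-- The point with polar coordinates `(r, θ)` in the frame with origin `v` and axes `L 1`, `L I`. -/
noncomputable def polarPoint (v : F) (L : ℂ ≃ₗᵢ[ℝ] F) (r θ : ℝ) : F :=
  v + L (r * Complex.exp (θ * Complex.I))

lemma logPolarChart_eq_polarPoint (v : F) (L : ℂ ≃ₗᵢ[ℝ] F) (w : ℂ) :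
    logPolarChart v L w = polarPoint v L (exp w.re) w.im := by
  rw [logPolarChart_apply, polarPoint, Complex.ofReal_exp, ← Complex.exp_add, Complex.re_add_im]

lemma polarPoint_zero (v : F) (L : ℂ ≃ₗᵢ[ℝ] F) (θ : ℝ) : polarPoint v L 0 θ = v := by
  simp [polarPoint]

lemma dist_polarPoint_center (hr : 0 ≤ r) : dist (polarPoint v L r θ) v = r := by
  rw [polarPoint, dist_self_add_left, L.norm_map, norm_mul, Complex.norm_exp_ofReal_mul_I, mul_one,
    Complex.norm_of_nonneg hr]

-- The second point is the foot of the perpendicular on the line through `v` in direction `φ`.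
lemma dist_polarPoint_mul_cos (v : F) (L : ℂ ≃ₗᵢ[ℝ] F) (r θ φ : ℝ) :
    dist (polarPoint v L r θ) (polarPoint v L (r * cos (θ - φ)) φ) = |r * sin (θ - φ)| := by
  have h : (r * Complex.exp (θ * Complex.I) -
      (r * cos (θ - φ) : ℝ) * Complex.exp (φ * Complex.I) : ℂ) =
        (r * sin (θ - φ) : ℝ) * (Complex.I * Complex.exp (φ * Complex.I)) := by
    have hθ : (θ * Complex.I : ℂ) = (θ - φ : ℝ) * Complex.I + φ * Complex.I := by
      push_cast; ring
    rw [hθ, Complex.exp_add, Complex.exp_mul_I]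
    push_cast
    ring
  rw [polarPoint, polarPoint, dist_add_left, dist_eq_norm, ← map_sub, L.norm_map, h, norm_mul,
    norm_mul, Complex.norm_I, Complex.norm_exp_ofReal_mul_I, Complex.norm_real, mul_one, mul_one,
    norm_eq_abs]

/-- Near `v`, up to radius `ε`, the set `Ω` looks like the open sector of opening `β` with apex `v`
and bisector `L 1`: it contains the sector and misses its two sides. -/
structure HasSectorAt (Ω : Set F) (β : ℝ) (v : F) (ε : ℝ) (L : ℂ ≃ₗᵢ[ℝ] F) : Prop where
  polarPoint_mem : ∀ {r θ : ℝ}, 0 < r → r < ε → |θ| < β / 2 → polarPoint v L r θ ∈ Ω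
  polarPoint_notMem : ∀ {r θ : ℝ}, 0 ≤ r → r < ε → |θ| = β / 2 → polarPoint v L r θ ∉ Ω

namespace HasSectorAt

lemma polarPoint_mem_frontier (h : HasSectorAt Ω β v ε L) (hβ : 0 < β) (hr : 0 ≤ r) (hrε : r < ε)
    (hθ : |θ| = β / 2) : polarPoint v L r θ ∈ frontier Ω := by
  refine ⟨?_, fun hint ↦ h.polarPoint_notMem hr hrε hθ (interior_subset hint)⟩
  have hcont : Continuous fun δ : ℝ ↦ polarPoint v L (r + δ) (θ * (1 - δ)) := by
    unfold polarPoint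
    fun_prop
  have hlim : Filter.Tendsto (fun δ : ℝ ↦ polarPoint v L (r + δ) (θ * (1 - δ))) (𝓝[>] 0)
      (𝓝 (polarPoint v L r θ)) := by
    simpa using (hcont.tendsto 0).mono_left nhdsWithin_le_nhds
  refine mem_closure_of_tendsto hlim ?_
  filter_upwards [Ioo_mem_nhdsGT (lt_min (sub_pos.2 hrε) one_pos)] with δ ⟨hδ, hδε⟩
  obtain ⟨hδr, hδ1⟩ := lt_min_iff.1 hδε
  refine h.polarPoint_mem (by linarith) (by linarith) ?_
  rw [abs_mul, abs_of_pos (by linarith : 0 < 1 - δ), hθ]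
  nlinarith

-- Compare with the apex if both sides are at an angle of at least `π / 2`, and otherwise with the
-- foot of the perpendicular on the closer side.
lemma infDist_frontier_le (h : HasSectorAt Ω β v ε L) (hβ : π ≤ β) (hr : 0 ≤ r) (hrε : r < ε)
    (hθ : |θ| ≤ β / 2) : Metric.infDist (polarPoint v L r θ) (frontier Ω) ≤
      r * cos (max (|θ| - (β - π) / 2) 0) := by
  have hβ0 : 0 < β := pi_pos.trans_le hβ
  rcases le_total (|θ| - (β - π) / 2) 0 with hθβ | hθβ
  · rw [max_eq_right hθβ, cos_zero, mul_one]
    have hv : v ∈ frontier Ω := polarPoint_zero v L (β / 2) ▸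
      h.polarPoint_mem_frontier hβ0 le_rfl (hr.trans_lt hrε) (abs_of_pos (half_pos hβ0))
    exact (Metric.infDist_le_dist_of_mem hv).trans_eq (dist_polarPoint_center hr)
  · rw [max_eq_left hθβ]
    obtain ⟨φ, hφ, hθφ⟩ : ∃ φ, |φ| = β / 2 ∧ |θ - φ| = β / 2 - |θ| := by
      rcases abs_cases θ with ⟨hθ', -⟩ | ⟨hθ', -⟩
      · exact ⟨β / 2, abs_of_pos (by linarith), by rw [abs_sub_comm, abs_of_nonneg] <;> linarith⟩
      · exact ⟨-(β / 2), by rw [abs_neg, abs_of_pos]; linarith,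
          by rw [abs_of_nonneg] <;> linarith⟩
    have hτ : |θ - φ| ≤ π / 2 := by linarith
    have hcos : 0 ≤ cos (θ - φ) := cos_nonneg_of_mem_Icc (abs_le.1 hτ)
    have hfoot := h.polarPoint_mem_frontier (r := r * cos (θ - φ)) hβ0 (by positivity)
      ((mul_le_of_le_one_right hr (cos_le_one _)).trans_lt hrε) hφ
    calc Metric.infDist (polarPoint v L r θ) (frontier Ω) ≤ |r * sin (θ - φ)| :=
          (Metric.infDist_le_dist_of_mem hfoot).trans_eq (dist_polarPoint_mul_cos v L r θ φ)
      _ = r * sin (β / 2 - |θ|) := by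
          rw [abs_mul, abs_of_nonneg hr,
            abs_sin_eq_sin_abs_of_abs_le_pi (hτ.trans (by linarith [pi_pos])), hθφ]
      _ = r * cos (|θ| - (β - π) / 2) := by
          rw [← cos_pi_div_two_sub]
          ring_nf

end HasSectorAt

end PolarCoordinates

section ReflexCorner

open EuclideanGeometry

variable {β : ℝ}

lemma div_eq_exp_or_exp_neg_of_angle_eq {p q : ℂ} (hp : p ≠ 0) (hq : q ≠ 0)
    (h : InnerProductGeometry.angle p q = 2 * π - β) :
    q / p = ‖q / p‖ * Complex.exp (β * Complex.I) ∨
      q / p = ‖q / p‖ * Complex.exp ((-β : ℝ) * Complex.I) := by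
  have hperiodic (x : ℝ) : Complex.exp ((x - 2 * π : ℝ) * Complex.I) =
      Complex.exp (x * Complex.I) := by
    rw [← Complex.exp_periodic]
    push_cast
    ring_nf
  rw [InnerProductGeometry.angle_comm, Complex.angle_eq_abs_arg hq hp] at h
  have hpolar := (Complex.norm_mul_exp_arg_mul_I (q / p)).symm
  rcases eq_or_eq_neg_of_abs_eq h with harg | harg
  · right
    rwa [harg, ← hperiodic, show 2 * π - β - 2 * π = -β by ring] at hpolar
  · left
    rwa [harg, neg_sub, hperiodic] at hpolar

lemma exists_linearIsometryEquiv_of_div_eq_exp {p q : ℂ} (hp : p ≠ 0)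
    (h : q / p = ‖q / p‖ * Complex.exp (β * Complex.I)) :
    ∃ L : ℂ ≃ₗᵢ[ℝ] ℂ, L (‖p‖ * Complex.exp ((-(β / 2) : ℝ) * Complex.I)) = p ∧
      L (‖q‖ * Complex.exp ((β / 2 : ℝ) * Complex.I)) = q := by
  have hpolar := Complex.norm_mul_exp_arg_mul_I p
  have hp0 : (‖p‖ : ℂ) ≠ 0 := by simpa using hp
  rw [norm_div, div_eq_iff hp, Complex.ofReal_div] at h
  refine ⟨rotation (Circle.exp (p.arg + β / 2)), ?_, ?_⟩ <;>
    rw [rotation_apply, Circle.coe_exp, mul_left_comm, ← Complex.exp_add]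
  · convert hpolar using 3
    push_cast
    ring
  · calc (‖q‖ : ℂ) * Complex.exp ((p.arg + β / 2 : ℝ) * Complex.I + (β / 2 : ℝ) * Complex.I)
        = ‖q‖ * (Complex.exp (β * Complex.I) * Complex.exp (p.arg * Complex.I)) := by
          rw [← Complex.exp_add]
          push_cast
          ring_nf
      _ = ‖q‖ / ‖p‖ * Complex.exp (β * Complex.I) *
            (‖p‖ * Complex.exp (p.arg * Complex.I)) := by field_simp
      _ = q := by rw [hpolar, ← h]

lemma exists_linearIsometryEquiv_of_angle_eq {p q : ℂ} (hp : p ≠ 0) (hq : q ≠ 0)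
    (h : InnerProductGeometry.angle p q = 2 * π - β) :
    ∃ L : ℂ ≃ₗᵢ[ℝ] ℂ, L (‖p‖ * Complex.exp ((-(β / 2) : ℝ) * Complex.I)) = p ∧
      L (‖q‖ * Complex.exp ((β / 2 : ℝ) * Complex.I)) = q := by
  rcases div_eq_exp_or_exp_neg_of_angle_eq hp hq h with hβ | hβ
  · exact exists_linearIsometryEquiv_of_div_eq_exp hp hβ
  · obtain ⟨L, hLp, hLq⟩ := exists_linearIsometryEquiv_of_div_eq_exp hp hβ
    refine ⟨Complex.conjLIE.trans L, ?_, ?_⟩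
    · simpa [← Complex.exp_conj, neg_div, map_ofNat] using hLp
    · simpa [← Complex.exp_conj, neg_div, map_ofNat] using hLq

lemma exists_polarPoint_eq {a b v : E2} (ha : a ≠ v) (hb : b ≠ v) (h : ∠ a v b = 2 * π - β) :
    ∃ L : ℂ ≃ₗᵢ[ℝ] E2, polarPoint v L (dist a v) (-(β / 2)) = a ∧
      polarPoint v L (dist b v) (β / 2) = b := by
  let J : E2 ≃ₗᵢ[ℝ] ℂ :=
    (Complex.isometryOfOrthonormal (EuclideanSpace.basisFun (Fin 2) ℝ)).symm
  obtain ⟨L, hp, hq⟩ := exists_linearIsometryEquiv_of_angle_eq (β := β)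
    (p := J (a - v)) (q := J (b - v)) (by simpa [sub_eq_zero]) (by simpa [sub_eq_zero])
    ((J.toLinearIsometry.angle_map _ _).trans h)
  rw [J.norm_map, ← dist_eq_norm] at hp hq
  refine ⟨L.trans J.symm, ?_, ?_⟩
  · rw [polarPoint, LinearIsometryEquiv.trans_apply, hp, J.symm_apply_apply, add_sub_cancel]
  · rw [polarPoint, LinearIsometryEquiv.trans_apply, hq, J.symm_apply_apply, add_sub_cancel]

/-- `Ω` has an interior angle `β > π` at `v`, with sides in the directions of `a` and `b`: near `v`
it is the complement of the wedge spanned by the two sides, whose angle is `2π - β`. -/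
structure IsReflexCorner (Ω : Set E2) (β : ℝ) (v a b : E2) : Prop where
  mem_Ioo : β ∈ Ioo π (2 * π)
  left_ne : a ≠ v
  right_ne : b ≠ v
  angle_eq : ∠ a v b = 2 * π - β
  exists_ball_inter_eq : ∃ ε > 0, Metric.ball v ε ∩ Ω = Metric.ball v ε \ wedge v a b

lemma polarPoint_notMem_wedge {v : E2} {L : ℂ ≃ₗᵢ[ℝ] E2} {r ρ σ θ : ℝ} (hβ : β ∈ Ioo π (2 * π))
    (hr : 0 < r) (hρ : 0 ≤ ρ) (hσ : 0 ≤ σ) (hθ : |θ| < β / 2) :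
    polarPoint v L r θ ∉ wedge v (polarPoint v L ρ (-(β / 2))) (polarPoint v L σ (β / 2)) := by
  rintro ⟨s, t, hs, ht, h⟩
  obtain ⟨hβ1, hβ2⟩ := hβ
  have hcomplex : (r * Complex.exp (θ * Complex.I) : ℂ) =
      (s * ρ : ℝ) * Complex.exp ((-(β / 2) : ℝ) * Complex.I) +
        (t * σ : ℝ) * Complex.exp ((β / 2 : ℝ) * Complex.I) := L.injective <| by
    simpa [polarPoint, add_assoc, mul_assoc, ← Complex.real_smul] using h
  have hcos : r * cos |θ| = (s * ρ + t * σ) * cos (β / 2) := by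
    have := congrArg Complex.re hcomplex
    simp only [Complex.add_re, Complex.re_ofReal_mul, Complex.exp_ofReal_mul_I_re, cos_neg] at this
    rw [cos_abs]
    linarith
  have hsinβ : 0 < sin (β / 2) := sin_pos_of_pos_of_lt_pi (by linarith) (by linarith)
  have hcosβ : cos (β / 2) < 0 := cos_neg_of_pi_div_two_lt_of_lt (by linarith) (by linarith)
  have hsin : r * sin |θ| ≤ (s * ρ + t * σ) * sin (β / 2) := by
    have := congrArg Complex.im hcomplex
    simp only [Complex.add_im, Complex.im_ofReal_mul, Complex.exp_ofReal_mul_I_im, sin_neg] at this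
    rw [← abs_sin_eq_sin_abs_of_abs_le_pi (by linarith), ← abs_of_pos hr, ← abs_mul, this, abs_le]
    constructor <;> nlinarith [mul_nonneg (mul_nonneg hs hρ) hsinβ.le,
      mul_nonneg (mul_nonneg ht hσ) hsinβ.le]
  have hpos : 0 < r * sin (β / 2 - |θ|) :=
    mul_pos hr (sin_pos_of_pos_of_lt_pi (by linarith) (by linarith [abs_nonneg θ]))
  have hneg : r * sin (β / 2 - |θ|) ≤ 0 := by
    rw [sin_sub]
    nlinarith [mul_le_mul_of_nonpos_left hsin hcosβ.le]
  exact hpos.not_ge hneg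

lemma smul_polarPoint_sub {F : Type*} [NormedAddCommGroup F] [InnerProductSpace ℝ F] (v : F)
    (L : ℂ ≃ₗᵢ[ℝ] F) {ρ : ℝ} (hρ : ρ ≠ 0) (r θ : ℝ) :
    v + (r / ρ) • (polarPoint v L ρ θ - v) = polarPoint v L r θ := by
  rw [polarPoint, add_sub_cancel_left, ← map_smul, Complex.real_smul, ← mul_assoc,
    ← Complex.ofReal_mul, div_mul_cancel₀ r hρ, polarPoint]

lemma IsReflexCorner.exists_hasSectorAt {Ω : Set E2} {v a b : E2}
    (h : IsReflexCorner Ω β v a b) : ∃ ε > 0, ∃ L, HasSectorAt Ω β v ε L := by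
  obtain ⟨ε, hε, hball⟩ := h.exists_ball_inter_eq
  obtain ⟨L, ha, hb⟩ := exists_polarPoint_eq h.left_ne h.right_ne h.angle_eq
  have hmem {r θ : ℝ} (hr : 0 ≤ r) (hrε : r < ε) :
      polarPoint v L r θ ∈ Ω ↔ polarPoint v L r θ ∉ wedge v a b := by
    have hdist : polarPoint v L r θ ∈ Metric.ball v ε := by
      rwa [Metric.mem_ball, dist_polarPoint_center hr]
    simpa [hdist] using Set.ext_iff.1 hball (polarPoint v L r θ)
  refine ⟨ε, hε, L, fun hr hrε hθ ↦ (hmem hr.le hrε).2 ?_,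
    fun {r θ} hr hrε hθ ↦ (hmem hr hrε).not_left.2 ?_⟩
  · rw [← ha, ← hb]
    exact polarPoint_notMem_wedge h.mem_Ioo hr dist_nonneg dist_nonneg hθ
  · rcases eq_or_eq_neg_of_abs_eq hθ with rfl | rfl
    · refine ⟨0, r / dist b v, le_rfl, by positivity, ?_⟩
      rw [zero_smul, add_zero]
      nth_rw 2 [← hb]
      rw [smul_polarPoint_sub v L (dist_ne_zero.2 h.right_ne)]
    · refine ⟨r / dist a v, 0, by positivity, le_rfl, ?_⟩
      rw [zero_smul, add_zero]
      nth_rw 2 [← ha]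
      rw [smul_polarPoint_sub v L (dist_ne_zero.2 h.left_ne)]

end ReflexCorner

section SharpConstant

open Complex (reProdIm)

lemma infDist_frontier_pos {X : Type*} [PseudoMetricSpace X] {U : Set X} (hU : IsOpen U)
    (hne : (frontier U).Nonempty) {x : X} (hx : x ∈ U) : 0 < Metric.infDist x (frontier U) := by
  rw [← isClosed_frontier.notMem_iff_infDist_pos hne, hU.frontier_eq]
  exact fun h ↦ h.2 hx

section

variable {F : Type*} [NormedAddCommGroup F] [InnerProductSpace ℝ F]
  {Ω : Set F} {v : F} {L : ℂ ≃ₗᵢ[ℝ] F} {β ε c : ℝ}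

namespace HasSectorAt

lemma frontier_nonempty (h : HasSectorAt Ω β v ε L) (hβ : 0 < β) (hε : 0 < ε) :
    (frontier Ω).Nonempty :=
  ⟨_, h.polarPoint_mem_frontier hβ le_rfl hε (abs_of_pos (half_pos hβ))⟩

lemma mapsTo_logPolarChart (h : HasSectorAt Ω β v ε L) (hε : 0 < ε) :
    MapsTo (logPolarChart v L) (Iio (log ε) ×ℂ Ioo (-(β / 2)) (β / 2)) Ω := fun w hw ↦ by
  rw [logPolarChart_eq_polarPoint]
  exact h.polarPoint_mem (exp_pos _) ((lt_log_iff_exp_lt hε).1 hw.1) (abs_lt.2 hw.2)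

lemma angularWeight_le (h : HasSectorAt Ω β v ε L) (hΩ : IsOpen Ω) (hβ : π ≤ β) (hε : 0 < ε) {w : ℂ}
    (hw : w ∈ Iio (log ε) ×ℂ Ioo (-(β / 2)) (β / 2)) :
    angularWeight ((β - π) / 2) w.im ≤ ‖Complex.exp w‖ ^ 2 *
      (Metric.infDist (logPolarChart v L w) (frontier Ω) ^ 2)⁻¹ := by
  have hpos : 0 < Metric.infDist (logPolarChart v L w) (frontier Ω) :=
    infDist_frontier_pos hΩ (h.frontier_nonempty (pi_pos.trans_le hβ) hε)
      (h.mapsTo_logPolarChart hε hw)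
  have hle := h.infDist_frontier_le hβ (exp_pos w.re).le ((lt_log_iff_exp_lt hε).1 hw.1)
    (abs_lt.2 hw.2).le
  rw [← logPolarChart_eq_polarPoint] at hle
  have hcos : 0 < cos (max (|w.im| - (β - π) / 2) 0) :=
    cos_max_pos (by linarith [abs_lt.2 hw.2])
  rw [angularWeight, Complex.norm_exp, ← div_eq_mul_inv, ← div_pow, ← inv_pow]
  gcongr
  rwa [inv_eq_one_div, div_le_div_iff₀ hcos hpos, one_mul]

lemma hardyFails_inv_infDist_sq [FiniteDimensional ℝ F] [MeasurableSpace F] [BorelSpace F]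
    (h : HasSectorAt Ω β v ε L) (hΩ : IsOpen Ω) (hβ : β ∈ Icc π (2 * π)) (hε : 0 < ε) (hc : 0 ≤ c)
    (hV : HardyFails ∞ (Ioo (-(β / 2)) (β / 2)) (angularWeight ((β - π) / 2)) c) :
    HardyFails ∞ Ω (fun x ↦ (Metric.infDist x (frontier Ω) ^ 2)⁻¹) c := by
  set S : Set ℂ := Iio (log ε) ×ℂ Ioo (-(β / 2)) (β / 2)
  have hmaps := h.mapsTo_logPolarChart hε
  have hS : S ⊆ (logPolarChart v L).source := fun w hw ↦
    mem_logPolarChart_source.2 (by linarith [abs_lt.2 hw.2, hβ.2])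
  have hweight : ContinuousOn (fun w : ℂ ↦ angularWeight ((β - π) / 2) w.im) S :=
    (continuousOn_angularWeight _).comp Complex.continuous_im.continuousOn fun _ hw ↦
      Ioo_subset_Ioo (by linarith) (by linarith) hw.2
  have hdist : ContinuousOn (fun w ↦ ‖Complex.exp w‖ ^ 2 *
      (Metric.infDist (logPolarChart v L w) (frontier Ω) ^ 2)⁻¹) S := by
    refine ContinuousOn.mul (by fun_prop) (ContinuousOn.inv₀ (((Metric.continuous_infDist_pt
      _).comp_continuousOn ((logPolarChart v L).continuousOn.mono hS)).pow 2) fun w hw ↦ ?_)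
    have := infDist_frontier_pos hΩ (h.frontier_nonempty (pi_pos.trans_le hβ.1) hε) (hmaps hw)
    positivity
  exact ((hV.comp_im (log ε)).mono_weight hc (isOpen_Iio.reProdIm isOpen_Ioo) hweight hdist
    fun w hw ↦ h.angularWeight_le hΩ hβ.1 hε hw).logPolarLift (by simp) hS |>.mono
    hmaps.image_subset

end HasSectorAt

lemma HardyFails.exists_integral_gradient_lt [FiniteDimensional ℝ F] [MeasurableSpace F]
    [BorelSpace F] {V : F → ℝ} (h : HardyFails ∞ Ω V c) :
    ∃ u : F → ℝ, ContDiff ℝ ∞ u ∧ HasCompactSupport u ∧ tsupport u ⊆ Ω ∧ u ≠ 0 ∧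
      ∫ x in Ω, ‖gradient u x‖ ^ 2 < c * ∫ x in Ω, V x * u x ^ 2 := by
  obtain ⟨u, hu, hlt⟩ := h
  refine ⟨u, hu.contDiff, hu.hasCompactSupport, hu.tsupport_subset, ?_, ?_⟩
  · rintro rfl
    simp at hlt
  · simp_rw [gradient, LinearIsometryEquiv.norm_map]
    rwa [setIntegral_eq_integral_of_forall_compl_eq_zero fun x hx ↦ by simp [hu.fderiv_eq_zero hx],
      setIntegral_eq_integral_of_forall_compl_eq_zero fun x hx ↦ by
        simp [hu.eq_zero_of_notMem hx]]

end

lemma IsNonconvexQuadrilateral.exists_isReflexCorner {Ω : Set E2} {β : ℝ}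
    (hΩ : IsNonconvexQuadrilateral Ω β) : ∃ v a b, IsReflexCorner Ω β v a b := by
  obtain ⟨-, -, -, hβ, hβ2, v, hinj, -, -, -, i, ⟨hangle, hball⟩, -⟩ := hΩ
  exact ⟨v i, v (i - 1), v (i + 1), ⟨hβ, hβ2⟩, hinj.ne (by simp), hinj.ne (by simp), hangle, hball⟩

theorem hardy_constant_nonconvex_quadrilateral_sharp_general {Ω : Set E2} {β c₀ c : ℝ} {v a b : E2}
    (hΩ : IsOpen Ω) (hcorner : IsReflexCorner Ω β v a b)
    (hc₀ : c₀ = 1 / 4 ∨ c₀ ∈ Ioc 0 (1 / 4) ∧ hardyEq c₀ β) (hc : c₀ < c) :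
    ∃ u : E2 → ℝ, ContDiff ℝ ∞ u ∧ HasCompactSupport u ∧ tsupport u ⊆ Ω ∧ u ≠ 0 ∧
      ∫ x in Ω, ‖gradient u x‖ ^ 2 <
        c * ∫ x in Ω, u x ^ 2 / Metric.infDist x (frontier Ω) ^ 2 := by
  obtain ⟨ε, hε, L, hsector⟩ := hcorner.exists_hasSectorAt
  obtain ⟨hβ, hβ2⟩ := hcorner.mem_Ioo
  have hc_pos : 0 < c := by
    rcases hc₀ with rfl | ⟨⟨hpos, -⟩, -⟩ <;> linarith
  simp_rw [div_eq_inv_mul]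
  exact (hsector.hardyFails_inv_infDist_sq hΩ ⟨hβ.le, hβ2.le⟩ hε hc_pos.le
    (hardyFails_angularWeight hβ.le hc₀ hc)).exists_integral_gradient_lt

end SharpConstant

/-- The constant `c_β` in the Hardy inequality for a non-convex quadrilateral with reflex
interior angle `β` is best possible: for every `c > c_β` there is a nonzero
`u ∈ C_c^∞(Ω)` with `∫_Ω |∇u|² < c ∫_Ω u²/d²`. -/
theorem hardy_constant_nonconvex_quadrilateral_sharp
    (Ω : Set E2) (β βcr cβ : ℝ)
    (hΩ : IsNonconvexQuadrilateral Ω β)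
    (hβcr : isBetaCr βcr)
    (hcβ : isHardyConst βcr β cβ) :
    ∀ c : ℝ, cβ < c →
      ∃ u : E2 → ℝ, ContDiff ℝ (⊤ : ℕ∞) u ∧ HasCompactSupport u ∧ tsupport u ⊆ Ω ∧ u ≠ 0 ∧
        ∫ x in Ω, ‖gradient u x‖ ^ 2 <
          c * ∫ x in Ω, (u x) ^ 2 / (Metric.infDist x (frontier Ω)) ^ 2 := by
  intro c hc
  obtain ⟨v, a, b, hcorner⟩ := hΩ.exists_isReflexCorner
  exact hardy_constant_nonconvex_quadrilateral_sharp_general hΩ.1 hcorner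
    (hcβ.imp And.right And.right) hc
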